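/- Let d ≥ 1, set s_d = d(d+1)/2, and let g be a smooth Riemannian metric on an open set Ω ⊆ ℝ^d containing a point p. Then there exist an open neighborhood U of p with U ⊆ Ω and an injective smooth map u : U → ℝ^{s_d + d} with (∇u(x))ᵀ ∇u(x) = g(x) for all x ∈ U; that is, every smooth d-dimensional metric admits a smooth local isometric embedding in ℝ^{s_d + d}. (Gromov–Rokhlin; Greene, 1970.) -/

import Mathlib

noncomputable section
open Matrix Set

attribute [local instance] Matrix.normedAddCommGroup Matrix.normedSpace

/-- The Jacobian matrix (n×d) of a map `u : ℝᵈ → ℝⁿ` at a point `x`. -/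
def Jac {d n : ℕ} (u : EuclideanSpace ℝ (Fin d) → EuclideanSpace ℝ (Fin n))
    (x : EuclideanSpace ℝ (Fin d)) : Matrix (Fin n) (Fin d) ℝ :=
  Matrix.of fun i j => fderiv ℝ u x (EuclideanSpace.single j 1) i

namespace LocalIsometry

open MeasureTheory SchwartzMap FourierTransform LineDeriv Laplacian Filter Topology
open scoped ComplexConjugate

set_option linter.unusedSectionVars false

section Weight

variable {V : Type*} [NormedAddCommGroup V]

/-- The submultiplicative weight `(1 + ‖ξ‖) ^ a * (1 + t ‖ξ‖) ^ s`. -/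
def weight (a : ℕ) (t : ℝ) (s : ℕ) (ξ : V) : ℝ := (1 + ‖ξ‖) ^ a * (1 + t * ‖ξ‖) ^ s

lemma one_le_weight (a : ℕ) {t : ℝ} (ht : 0 ≤ t) (s : ℕ) (ξ : V) : 1 ≤ weight a t s ξ := by
  unfold weight
  have h1 : 1 ≤ (1 + ‖ξ‖) ^ a := one_le_pow₀ (by linarith [norm_nonneg ξ])
  have h2 : 1 ≤ (1 + t * ‖ξ‖) ^ s := one_le_pow₀ (by nlinarith [norm_nonneg ξ])
  nlinarith

lemma weight_nonneg (a : ℕ) {t : ℝ} (ht : 0 ≤ t) (s : ℕ) (ξ : V) : 0 ≤ weight a t s ξ :=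
  zero_le_one.trans (one_le_weight a ht s ξ)

lemma weight_neg (a : ℕ) (t : ℝ) (s : ℕ) (ξ : V) : weight a t s (-ξ) = weight a t s ξ := by
  simp [weight]

lemma weight_add_le (a : ℕ) {t : ℝ} (ht : 0 ≤ t) (s : ℕ) (ξ η : V) :
    weight a t s (ξ + η) ≤ weight a t s ξ * weight a t s η := by
  have hx := norm_nonneg ξ
  have hy := norm_nonneg η
  have hxy := norm_add_le ξ η
  unfold weight
  calc (1 + ‖ξ + η‖) ^ a * (1 + t * ‖ξ + η‖) ^ s
      ≤ ((1 + ‖ξ‖) * (1 + ‖η‖)) ^ a * ((1 + t * ‖ξ‖) * (1 + t * ‖η‖)) ^ s := by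
        gcongr
        · nlinarith
        · nlinarith [mul_le_mul_of_nonneg_left hxy ht,
            mul_nonneg (mul_nonneg ht hx) (mul_nonneg ht hy)]
    _ = _ := by rw [mul_pow, mul_pow]; ring

@[fun_prop]
lemma continuous_weight (a : ℕ) (t : ℝ) (s : ℕ) : Continuous (weight (V := V) a t s) := by
  unfold weight; fun_prop

lemma weight_mono (a : ℕ) {t t' : ℝ} (ht : 0 ≤ t) (htt : t ≤ t') (s : ℕ) (ξ : V) :
    weight a t s ξ ≤ weight a t' s ξ := by
  unfold weight; gcongr

end Weight

section Symbol

variable {V : Type*} [NormedAddCommGroup V] [InnerProductSpace ℝ V]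

/-- The symbol of `(1 - Δ)⁻¹`. -/
def resolventSymbol (ξ : V) : ℝ := (1 + ‖(2 * Real.pi) • ξ‖ ^ 2) ^ (-1 : ℝ)

lemma resolventSymbol_hasTemperateGrowth :
    (resolventSymbol (V := V)).HasTemperateGrowth :=
  (Function.hasTemperateGrowth_one_add_norm_sq_rpow V (-1)).comp
    (((2 * Real.pi) • ContinuousLinearMap.id ℝ V).hasTemperateGrowth)

lemma resolventSymbol_eq (ξ : V) :
    resolventSymbol ξ = (1 + (2 * Real.pi) ^ 2 * ‖ξ‖ ^ 2)⁻¹ := by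
  rw [resolventSymbol, Real.rpow_neg_one, norm_smul, mul_pow, Real.norm_eq_abs, sq_abs]

end Symbol

variable {V : Type*} [NormedAddCommGroup V] [InnerProductSpace ℝ V] [FiniteDimensional ℝ V]
  [MeasurableSpace V] [BorelSpace V]

lemma integrable_one_add_norm_pow_mul (f : 𝓢(V, ℂ)) (k : ℕ) :
    Integrable (fun ξ => (1 + ‖ξ‖) ^ k * ‖f ξ‖) := by
  have : (fun ξ => (1 + ‖ξ‖) ^ k * ‖f ξ‖) =
      fun ξ => ∑ m ∈ Finset.range (k + 1), (k.choose m : ℝ) * (‖ξ‖ ^ m * ‖f ξ‖) := by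
    ext ξ
    rw [add_comm, add_pow, Finset.sum_mul]
    refine Finset.sum_congr rfl fun m _ => ?_
    simp; ring
  rw [this]
  exact integrable_finsetSum _ fun m _ => (f.integrable_pow_mul volume m).const_mul _

lemma integrable_weight_mul (f : 𝓢(V, ℂ)) (a : ℕ) {t : ℝ} (ht : 0 ≤ t) (s : ℕ) :
    Integrable (fun ξ => weight a t s ξ * ‖f ξ‖) := by
  refine ((integrable_one_add_norm_pow_mul f (a + s)).const_mul ((1 + t) ^ s)).mono' ?_ ?_
  · exact ((continuous_weight a t s).mul f.continuous.norm).aestronglyMeasurable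
  · refine Eventually.of_forall fun ξ => ?_
    rw [Real.norm_of_nonneg (mul_nonneg (weight_nonneg a ht s ξ) (norm_nonneg _)), ← mul_assoc]
    gcongr
    unfold weight
    rw [pow_add, mul_left_comm, ← mul_pow]
    gcongr
    nlinarith [norm_nonneg ξ]

/-- Weighted `L¹` norm of the Fourier transform of a complex Schwartz function. -/
def fnormC (a : ℕ) (t : ℝ) (s : ℕ) (f : 𝓢(V, ℂ)) : ℝ := ∫ ξ, weight a t s ξ * ‖𝓕 f ξ‖

lemma fnormC_nonneg (a : ℕ) {t : ℝ} (ht : 0 ≤ t) (s : ℕ) (f : 𝓢(V, ℂ)) :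
    0 ≤ fnormC a t s f :=
  integral_nonneg fun ξ => mul_nonneg (weight_nonneg a ht s ξ) (norm_nonneg _)

lemma fnormC_le_of_norm_le (a b : ℕ) {t : ℝ} (ht : 0 ≤ t) (s : ℕ) (c : ℝ) (f g : 𝓢(V, ℂ))
    (h : ∀ ξ : V, (1 + ‖ξ‖) ^ a * ‖𝓕 f ξ‖ ≤ c * ((1 + ‖ξ‖) ^ b * ‖𝓕 g ξ‖)) :
    fnormC a t s f ≤ c * fnormC b t s g := by
  unfold fnormC
  rw [← integral_const_mul]
  refine integral_mono (integrable_weight_mul _ a ht s)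
    ((integrable_weight_mul _ b ht s).const_mul c) fun ξ => ?_
  have h2 : 0 ≤ (1 + t * ‖ξ‖) ^ s := by positivity
  have := mul_le_mul_of_nonneg_right (h ξ) h2
  simp only [weight]
  nlinarith

lemma fnormC_add_le (a : ℕ) {t : ℝ} (ht : 0 ≤ t) (s : ℕ) (f g : 𝓢(V, ℂ)) :
    fnormC a t s (f + g) ≤ fnormC a t s f + fnormC a t s g := by
  unfold fnormC
  rw [← integral_add (integrable_weight_mul _ a ht s) (integrable_weight_mul _ a ht s)]
  refine integral_mono (integrable_weight_mul _ a ht s)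
    ((integrable_weight_mul _ a ht s).add (integrable_weight_mul _ a ht s)) fun ξ => ?_
  simp only [FourierTransform.fourier_add, _root_.add_apply, ← mul_add]
  gcongr
  · exact weight_nonneg a ht s ξ
  · exact norm_add_le _ _

lemma fnormC_smul (a : ℕ) (t : ℝ) (s : ℕ) (c : ℝ) (f : 𝓢(V, ℂ)) :
    fnormC a t s (c • f) = |c| * fnormC a t s f := by
  unfold fnormC
  rw [← integral_const_mul]
  congr 1; ext ξ
  rw [FourierTransform.fourier_smul]
  simp
  ring

lemma fourier_fourier_apply (f : 𝓢(V, ℂ)) (x : V) : 𝓕 (𝓕 f) x = f (-x) := by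
  have h : 𝓕⁻ (𝓕 f) (-x) = 𝓕 (𝓕 f) x := by
    rw [fourierInv_apply_eq]
    simp
  rw [← h, FourierTransform.fourierInv_fourier_eq]

lemma fourier_pairing_mul (f g : 𝓢(V, ℂ)) :
    𝓕 (pairing (ContinuousLinearMap.mul ℂ ℂ) f g) =
      SchwartzMap.convolution (ContinuousLinearMap.mul ℂ ℂ) (𝓕 f) (𝓕 g) := by
  have h : 𝓕 (𝓕 (pairing (ContinuousLinearMap.mul ℂ ℂ) f g)) =
      𝓕 (SchwartzMap.convolution (ContinuousLinearMap.mul ℂ ℂ) (𝓕 f) (𝓕 g)) := by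
    ext x
    rw [fourier_convolution]
    simp [fourier_fourier_apply]
  simpa using congrArg (fun w => 𝓕⁻ w) h

lemma fnormC_mul_le (a : ℕ) {t : ℝ} (ht : 0 ≤ t) (s : ℕ) (f g : 𝓢(V, ℂ)) :
    fnormC a t s (pairing (ContinuousLinearMap.mul ℂ ℂ) f g)
      ≤ fnormC a t s f * fnormC a t s g := by
  unfold fnormC
  set F : V → ℝ := fun ξ => weight a t s ξ * ‖𝓕 f ξ‖ with hF
  set G : V → ℝ := fun ξ => weight a t s ξ * ‖𝓕 g ξ‖ with hG
  have iF : Integrable F := integrable_weight_mul _ a ht s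
  have iG : Integrable G := integrable_weight_mul _ a ht s
  have key := integral_convolution (ContinuousLinearMap.mul ℝ ℝ) (μ := volume) (ν := volume) iF iG
  simp only [ContinuousLinearMap.mul_apply'] at key
  rw [← key]
  refine integral_mono_ae (integrable_weight_mul _ a ht s)
    (iF.integrable_convolution (ContinuousLinearMap.mul ℝ ℝ) iG) ?_
  filter_upwards [iF.ae_convolution_exists (ContinuousLinearMap.mul ℝ ℝ) iG] with ξ hξ
  rw [fourier_pairing_mul, SchwartzMap.convolution_apply]
  simp only [MeasureTheory.convolution, ContinuousLinearMap.mul_apply']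
  calc weight a t s ξ * ‖∫ η, 𝓕 f η * 𝓕 g (ξ - η)‖
      ≤ weight a t s ξ * ∫ η, ‖𝓕 f η * 𝓕 g (ξ - η)‖ := by
        gcongr
        · exact weight_nonneg a ht s ξ
        · exact norm_integral_le_integral_norm _
    _ = ∫ η, weight a t s ξ * ‖𝓕 f η * 𝓕 g (ξ - η)‖ := (integral_const_mul _ _).symm
    _ ≤ ∫ η, F η * G (ξ - η) := by
        refine integral_mono_of_nonneg (Eventually.of_forall fun η => ?_) hξ
          (Eventually.of_forall fun η => ?_)
        · exact mul_nonneg (weight_nonneg a ht s ξ) (norm_nonneg _)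
        · have := weight_add_le a ht s η (ξ - η)
          rw [add_sub_cancel] at this
          simp only [hF, hG, norm_mul]
          calc _ ≤ (weight a t s η * weight a t s (ξ - η)) * (‖𝓕 f η‖ * ‖𝓕 g (ξ - η)‖) := by
                gcongr
            _ = _ := by ring

lemma fourier_lineDeriv_norm_le (f : 𝓢(V, ℂ)) (m ξ : V) :
    ‖𝓕 (∂_{m} f) ξ‖ ≤ 2 * Real.pi * ‖m‖ * (‖ξ‖ * ‖𝓕 f ξ‖) := by
  have h : (inner ℝ · m : V → ℝ).HasTemperateGrowth := by fun_prop
  rw [fourier_lineDerivOp_eq, _root_.smul_apply, smulLeftCLM_apply_apply h, norm_smul, norm_smul]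
  have h1 : ‖(2 * Real.pi * Complex.I : ℂ)‖ = 2 * Real.pi := by
    simp [abs_of_pos Real.pi_pos]
  rw [h1]
  have := norm_inner_le_norm (𝕜 := ℝ) ξ m
  calc _ ≤ 2 * Real.pi * (‖ξ‖ * ‖m‖ * ‖𝓕 f ξ‖) := by gcongr
    _ = _ := by ring

lemma fnormC_lineDeriv_le (a : ℕ) {t : ℝ} (ht : 0 ≤ t) (s : ℕ) (m : V) (f : 𝓢(V, ℂ)) :
    fnormC a t s (∂_{m} f) ≤ 2 * Real.pi * ‖m‖ * fnormC (a + 1) t s f := by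
  refine fnormC_le_of_norm_le a (a + 1) ht s _ _ _ fun ξ => ?_
  calc (1 + ‖ξ‖) ^ a * ‖𝓕 (∂_{m} f) ξ‖
      ≤ (1 + ‖ξ‖) ^ a * (2 * Real.pi * ‖m‖ * ((1 + ‖ξ‖) * ‖𝓕 f ξ‖)) := by
        gcongr
        refine (fourier_lineDeriv_norm_le f m ξ).trans ?_
        gcongr
        linarith
    _ = _ := by ring

lemma fnormC_succ_le (a : ℕ) {t : ℝ} (ht : 0 ≤ t) (s : ℕ) (f : 𝓢(V, ℂ)) :
    fnormC a t s f ≤ fnormC (a + 1) t s f := by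
  have := fnormC_le_of_norm_le a (a + 1) ht s 1 f f fun ξ => by
    rw [one_mul, pow_succ]
    gcongr
    have : 0 ≤ (1 + ‖ξ‖) ^ a := by positivity
    nlinarith [norm_nonneg ξ]
  simpa using this

/-- The operator `(1 - Δ)⁻¹` on complex Schwartz functions. -/
def resolventC : 𝓢(V, ℂ) →L[ℝ] 𝓢(V, ℂ) := fourierMultiplierCLM ℂ (resolventSymbol (V := V))

lemma fourier_resolventC_apply (f : 𝓢(V, ℂ)) (ξ : V) :
    𝓕 (resolventC f) ξ = resolventSymbol ξ • 𝓕 f ξ := by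
  rw [resolventC, fourierMultiplierCLM_apply, FourierTransform.fourier_fourierInv_eq,
    smulLeftCLM_apply_apply resolventSymbol_hasTemperateGrowth]

lemma resolventC_sub_laplacian (f : 𝓢(V, ℂ)) : resolventC f - Δ (resolventC f) = f := by
  have hsq : (fun ξ : V => ‖ξ‖ ^ 2).HasTemperateGrowth := Function.hasTemperateGrowth_norm_sq V
  have h : 𝓕 (resolventC f) = 𝓕 (f + Δ (resolventC f)) := by
    ext ξ
    rw [laplacian_eq_fourierMultiplierCLM, FourierTransform.fourier_add,
      FourierTransform.fourier_smul, fourierMultiplierCLM_apply,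
      FourierTransform.fourier_fourierInv_eq, _root_.add_apply, _root_.smul_apply]
    erw [smulLeftCLM_apply_apply hsq]
    rw [fourier_resolventC_apply, resolventSymbol_eq, smul_smul, smul_smul]
    nth_rewrite 2 [← one_smul ℝ (𝓕 f ξ)]
    rw [← add_smul]
    have : (1 + (2 * Real.pi) ^ 2 * ‖ξ‖ ^ 2) ≠ 0 := by positivity
    congr 1
    field_simp
    ring
  rw [sub_eq_iff_eq_add]
  simpa using congrArg (fun w => 𝓕⁻ w) h

lemma fnormC_resolventC_le {t : ℝ} (ht : 0 ≤ t) (s : ℕ) (f : 𝓢(V, ℂ)) :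
    fnormC 2 t s (resolventC f) ≤ 2 * fnormC 0 t s f := by
  refine fnormC_le_of_norm_le 2 0 ht s _ _ _ fun ξ => ?_
  rw [fourier_resolventC_apply, norm_smul, resolventSymbol_eq, Real.norm_of_nonneg (by positivity),
    ← mul_assoc, pow_zero, one_mul]
  gcongr
  rw [mul_inv_le_iff₀ (by positivity)]
  have : 1 ≤ (2 * Real.pi) ^ 2 := by nlinarith [Real.pi_gt_three]
  nlinarith [sq_nonneg (‖ξ‖ - 1), sq_nonneg ‖ξ‖]

lemma lineDeriv_resolventC (m : V) (f : 𝓢(V, ℂ)) :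
    ∂_{m} (resolventC f) = resolventC (∂_{m} f) := by
  have hm : (inner ℝ · m : V → ℝ).HasTemperateGrowth := by fun_prop
  have h : 𝓕 (∂_{m} (resolventC f)) = 𝓕 (resolventC (∂_{m} f)) := by
    ext ξ
    rw [fourier_resolventC_apply, fourier_lineDerivOp_eq, fourier_lineDerivOp_eq,
      _root_.smul_apply, _root_.smul_apply, smulLeftCLM_apply_apply hm,
      smulLeftCLM_apply_apply hm, fourier_resolventC_apply, smul_comm (resolventSymbol ξ),
      smul_comm (resolventSymbol ξ)]
  simpa using congrArg (fun w => 𝓕⁻ w) h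

/-- Pointwise complex conjugation on Schwartz functions. -/
def conjS : 𝓢(V, ℂ) →L[ℝ] 𝓢(V, ℂ) := postcompCLM (Complex.conjCLE : ℂ →L[ℝ] ℂ)

lemma fourier_conjS_apply (f : 𝓢(V, ℂ)) (ξ : V) : 𝓕 (conjS f) ξ = conj (𝓕 f (-ξ)) := by
  rw [fourier_coe, fourier_coe, Real.fourier_eq, Real.fourier_eq, ← integral_conj]
  congr 1; ext v
  simp only [conjS, postcompCLM_apply, Circle.smul_def, smul_eq_mul, map_mul, ← Circle.coe_inv_eq_conj]
  rw [← AddChar.map_neg_eq_inv]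
  simp

lemma fnormC_conjS (a : ℕ) (t : ℝ) (s : ℕ) (f : 𝓢(V, ℂ)) :
    fnormC a t s (conjS f) = fnormC a t s f := by
  unfold fnormC
  rw [← integral_neg_eq_self]
  simp [fourier_conjS_apply, weight_neg]

/-- Complexification of real Schwartz functions. -/
def complexify : 𝓢(V, ℝ) →L[ℝ] 𝓢(V, ℂ) := postcompCLM Complex.ofRealCLM

/-- Real part of complex Schwartz functions. -/
def realPart : 𝓢(V, ℂ) →L[ℝ] 𝓢(V, ℝ) := postcompCLM Complex.reCLM

@[simp] lemma complexify_apply (f : 𝓢(V, ℝ)) (x : V) : complexify f x = (f x : ℂ) := rfl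

@[simp] lemma realPart_apply (f : 𝓢(V, ℂ)) (x : V) : realPart f x = (f x).re := rfl

@[simp] lemma realPart_complexify (f : 𝓢(V, ℝ)) : realPart (complexify f) = f := by
  ext x; simp

lemma complexify_realPart (f : 𝓢(V, ℂ)) :
    complexify (realPart f) = (1 / 2 : ℝ) • (f + conjS f) := by
  ext x
  simp only [complexify_apply, realPart_apply, conjS, _root_.smul_apply, _root_.add_apply,
    postcompCLM_apply]
  apply Complex.ext
  · simp; ring
  · simp

lemma lineDeriv_postcomp {F G : Type*} [NormedAddCommGroup F] [NormedSpace ℝ F]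
    [NormedAddCommGroup G] [NormedSpace ℝ G] (L : F →L[ℝ] G) (m : V) (f : 𝓢(V, F)) :
    ∂_{m} (postcompCLM L f) = postcompCLM L (∂_{m} f) := by
  ext x
  have h : HasFDerivAt (fun y => L (f y)) (L.comp (fderiv ℝ f x)) x :=
    L.hasFDerivAt.comp x (f.hasFDerivAt x)
  rw [lineDerivOp_apply_eq_fderiv, postcompCLM_apply, lineDerivOp_apply_eq_fderiv]
  have h' : (⇑(postcompCLM L f) : V → G) = fun y => L (f y) := rfl
  rw [h', h.fderiv]
  rfl

/-- Pointwise product of real Schwartz functions. -/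
def mulS (f g : 𝓢(V, ℝ)) : 𝓢(V, ℝ) := pairing (ContinuousLinearMap.mul ℝ ℝ) f g

@[simp] lemma mulS_apply (f g : 𝓢(V, ℝ)) (x : V) : mulS f g x = f x * g x := rfl

/-- Weighted `L¹` norm of the Fourier transform of a real Schwartz function. -/
def fnorm (a : ℕ) (t : ℝ) (s : ℕ) (f : 𝓢(V, ℝ)) : ℝ := fnormC a t s (complexify f)

lemma fnorm_nonneg (a : ℕ) {t : ℝ} (ht : 0 ≤ t) (s : ℕ) (f : 𝓢(V, ℝ)) : 0 ≤ fnorm a t s f :=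
  fnormC_nonneg a ht s _

lemma fnorm_add_le (a : ℕ) {t : ℝ} (ht : 0 ≤ t) (s : ℕ) (f g : 𝓢(V, ℝ)) :
    fnorm a t s (f + g) ≤ fnorm a t s f + fnorm a t s g := by
  unfold fnorm; rw [map_add]; exact fnormC_add_le a ht s _ _

lemma fnorm_smul (a : ℕ) (t : ℝ) (s : ℕ) (c : ℝ) (f : 𝓢(V, ℝ)) :
    fnorm a t s (c • f) = |c| * fnorm a t s f := by
  unfold fnorm; rw [map_smul]; exact fnormC_smul a t s c _

lemma fnorm_zero (a : ℕ) (t : ℝ) (s : ℕ) : fnorm a t s (0 : 𝓢(V, ℝ)) = 0 := by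
  simpa using fnorm_smul a t s 0 (0 : 𝓢(V, ℝ))

lemma fnorm_neg (a : ℕ) (t : ℝ) (s : ℕ) (f : 𝓢(V, ℝ)) :
    fnorm a t s (-f) = fnorm a t s f := by
  simpa using fnorm_smul a t s (-1) f

lemma fnorm_sub_le (a : ℕ) {t : ℝ} (ht : 0 ≤ t) (s : ℕ) (f g : 𝓢(V, ℝ)) :
    fnorm a t s (f - g) ≤ fnorm a t s f + fnorm a t s g := by
  rw [sub_eq_add_neg, ← fnorm_neg a t s g]; exact fnorm_add_le a ht s _ _

lemma fnorm_sum_le (a : ℕ) {t : ℝ} (ht : 0 ≤ t) (s : ℕ) {ι : Type*} (S : Finset ι)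
    (f : ι → 𝓢(V, ℝ)) : fnorm a t s (∑ i ∈ S, f i) ≤ ∑ i ∈ S, fnorm a t s (f i) := by
  classical
  induction S using Finset.induction_on with
  | empty => simp [fnorm_zero]
  | insert i S hi ih =>
    rw [Finset.sum_insert hi, Finset.sum_insert hi]
    exact (fnorm_add_le a ht s _ _).trans (by gcongr)

lemma fnorm_mulS_le (a : ℕ) {t : ℝ} (ht : 0 ≤ t) (s : ℕ) (f g : 𝓢(V, ℝ)) :
    fnorm a t s (mulS f g) ≤ fnorm a t s f * fnorm a t s g := by
  have : complexify (mulS f g) =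
      pairing (ContinuousLinearMap.mul ℂ ℂ) (complexify f) (complexify g) := by
    ext x; simp
  unfold fnorm
  rw [this]
  exact fnormC_mul_le a ht s _ _

lemma fnorm_lineDeriv_le (a : ℕ) {t : ℝ} (ht : 0 ≤ t) (s : ℕ) (m : V) (f : 𝓢(V, ℝ)) :
    fnorm a t s (∂_{m} f) ≤ 2 * Real.pi * ‖m‖ * fnorm (a + 1) t s f := by
  have : complexify (∂_{m} f) = ∂_{m} (complexify f) := (lineDeriv_postcomp _ m f).symm
  unfold fnorm
  rw [this]
  exact fnormC_lineDeriv_le a ht s m _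

lemma fnorm_succ_le (a : ℕ) {t : ℝ} (ht : 0 ≤ t) (s : ℕ) (f : 𝓢(V, ℝ)) :
    fnorm a t s f ≤ fnorm (a + 1) t s f := fnormC_succ_le a ht s _

lemma fnorm_realPart_le (a : ℕ) {t : ℝ} (ht : 0 ≤ t) (s : ℕ) (f : 𝓢(V, ℂ)) :
    fnorm a t s (realPart f) ≤ fnormC a t s f := by
  rw [fnorm, complexify_realPart, fnormC_smul]
  have := fnormC_add_le a ht s f (conjS f)
  rw [fnormC_conjS] at this
  rw [abs_of_pos (by norm_num)]
  linarith

/-- The operator `(1 - Δ)⁻¹` on real Schwartz functions. -/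
def resolvent : 𝓢(V, ℝ) →L[ℝ] 𝓢(V, ℝ) := realPart.comp (resolventC.comp complexify)

lemma fnorm_resolvent_le {t : ℝ} (ht : 0 ≤ t) (s : ℕ) (f : 𝓢(V, ℝ)) :
    fnorm 2 t s (resolvent f) ≤ 2 * fnorm 0 t s f :=
  (fnorm_realPart_le 2 ht s _).trans (fnormC_resolventC_le ht s _)

lemma lineDeriv_resolvent (m : V) (f : 𝓢(V, ℝ)) :
    ∂_{m} (resolvent f) = resolvent (∂_{m} f) := by
  have h1 : ∂_{m} (resolvent f) = realPart (∂_{m} (resolventC (complexify f))) :=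
    lineDeriv_postcomp _ m _
  have h2 : ∂_{m} (complexify f) = complexify (∂_{m} f) := lineDeriv_postcomp _ m _
  rw [h1, lineDeriv_resolventC, h2]
  rfl

lemma laplacian_postcomp {F G : Type*} [NormedAddCommGroup F] [NormedSpace ℝ F]
    [NormedAddCommGroup G] [NormedSpace ℝ G] (L : F →L[ℝ] G) (f : 𝓢(V, F)) :
    Δ (postcompCLM L f) = postcompCLM L (Δ f) := by
  rw [laplacian_eq_sum (stdOrthonormalBasis ℝ V), laplacian_eq_sum (stdOrthonormalBasis ℝ V),
    map_sum]
  simp_rw [lineDeriv_postcomp]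

lemma resolvent_sub_laplacian (f : 𝓢(V, ℝ)) : resolvent f - Δ (resolvent f) = f := by
  have h1 : Δ (resolvent f) = realPart (Δ (resolventC (complexify f))) := laplacian_postcomp _ _
  have h2 : resolvent f = realPart (resolventC (complexify f)) := rfl
  rw [h1, h2, ← map_sub, resolventC_sub_laplacian, realPart_complexify]

lemma laplacian_resolvent (f : 𝓢(V, ℝ)) : Δ (resolvent f) = resolvent (Δ f) := by
  rw [laplacian_eq_sum (stdOrthonormalBasis ℝ V), laplacian_eq_sum (stdOrthonormalBasis ℝ V),
    map_sum]
  simp_rw [lineDeriv_resolvent]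

lemma resolvent_of_sub_laplacian (f : 𝓢(V, ℝ)) : resolvent (f - Δ f) = f := by
  rw [map_sub, ← laplacian_resolvent, resolvent_sub_laplacian]

lemma lineDeriv_mulS (m : V) (f g : 𝓢(V, ℝ)) :
    ∂_{m} (mulS f g) = mulS (∂_{m} f) g + mulS f (∂_{m} g) := by
  ext x
  have h := (f.hasFDerivAt x).mul (g.hasFDerivAt x)
  have h' : (⇑(mulS f g) : V → ℝ) = fun y => f y * g y := rfl
  rw [lineDerivOp_apply_eq_fderiv, h']
  simp only [_root_.add_apply, mulS_apply, lineDerivOp_apply_eq_fderiv]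
  erw [h.fderiv]
  simp
  ring

lemma lineDeriv_comm (m n : V) (f : 𝓢(V, ℝ)) : ∂_{m} (∂_{n} f) = ∂_{n} (∂_{m} f) := by
  have key : ∀ (m n : V) (x : V), ∂_{m} (∂_{n} f) x = fderiv ℝ (fderiv ℝ f) x m n := by
    intro m n x
    rw [lineDerivOp_apply_eq_fderiv]
    have h' : (⇑(∂_{n} f : 𝓢(V, ℝ)) : V → ℝ) = fun y => fderiv ℝ f y n := by
      ext y; exact lineDerivOp_apply_eq_fderiv n f y
    have hd : DifferentiableAt ℝ (fderiv ℝ f) x :=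
      ((f.smooth 2).fderiv_right (m := 1) (by norm_num)).differentiable (by norm_num) x
    rw [h', fderiv_clm_apply hd (by fun_prop)]
    simp
  ext x
  rw [key, key]
  exact ((f.smooth 2).contDiffAt.isSymmSndFDerivAt (by simp)) m n

/-- The quadratic expression that becomes a derivative of lower order quantities after applying
`1 - Δ`, the heart of Günther's trick. -/
lemma mul_lineDeriv_eq {ι : Type*} [Fintype ι] (b : OrthonormalBasis ι ℝ V) (f : 𝓢(V, ℝ))
    (m n : V) :
    mulS (∂_{m} f) (∂_{n} f) =
      -∂_{m} (resolvent (mulS (Δ f) (∂_{n} f))) - ∂_{n} (resolvent (mulS (Δ f) (∂_{m} f)))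
      + resolvent (mulS (∂_{m} f) (∂_{n} f) + (2 : ℝ) • mulS (Δ f) (∂_{m} (∂_{n} f))
        - (2 : ℝ) • ∑ k, mulS (∂_{b k} (∂_{m} f)) (∂_{b k} (∂_{n} f))) := by
  have h3 : ∀ k, ∂_{b k} (∂_{b k} (∂_{m} f)) = ∂_{m} (∂_{b k} (∂_{b k} f)) := fun k => by
    rw [lineDeriv_comm (b k) m, lineDeriv_comm (b k) m]
  have h4 : ∀ k, ∂_{b k} (∂_{b k} (∂_{n} f)) = ∂_{n} (∂_{b k} (∂_{b k} f)) := fun k => by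
    rw [lineDeriv_comm (b k) n, lineDeriv_comm (b k) n]
  have hsum : ∀ (v : V), ∂_{v} (Δ f) = ∑ k, ∂_{v} (∂_{b k} (∂_{b k} f)) := fun v => by
    rw [laplacian_eq_sum b]
    exact map_sum (lineDerivOpCLM ℝ 𝓢(V, ℝ) v) _ _
  have hΔ : mulS (∂_{m} f) (∂_{n} f) - Δ (mulS (∂_{m} f) (∂_{n} f)) =
      -∂_{m} (mulS (Δ f) (∂_{n} f)) - ∂_{n} (mulS (Δ f) (∂_{m} f))
      + (mulS (∂_{m} f) (∂_{n} f) + (2 : ℝ) • mulS (Δ f) (∂_{m} (∂_{n} f))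
        - (2 : ℝ) • ∑ k, mulS (∂_{b k} (∂_{m} f)) (∂_{b k} (∂_{n} f))) := by
    rw [laplacian_eq_sum b (mulS _ _), lineDeriv_mulS m, lineDeriv_mulS n (Δ f), hsum, hsum,
      lineDeriv_comm n m]
    have hk : ∀ k, ∂_{b k} (∂_{b k} (mulS (∂_{m} f) (∂_{n} f))) =
        mulS (∂_{m} (∂_{b k} (∂_{b k} f))) (∂_{n} f)
        + (2 : ℝ) • mulS (∂_{b k} (∂_{m} f)) (∂_{b k} (∂_{n} f))
        + mulS (∂_{m} f) (∂_{n} (∂_{b k} (∂_{b k} f))) := fun k => by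
      rw [lineDeriv_mulS, lineDerivOp_add, lineDeriv_mulS, lineDeriv_mulS, h3, h4]
      ext x
      simp
      ring
    simp_rw [hk]
    ext x
    simp [Finset.sum_add_distrib, Finset.sum_mul, Finset.mul_sum, _root_.sum_apply]
    ring_nf
  have := congrArg resolvent hΔ
  rw [resolvent_of_sub_laplacian] at this
  rw [lineDeriv_resolvent, lineDeriv_resolvent]
  conv_lhs => rw [this]
  simp only [map_add, map_sub, map_neg]

lemma norm_iteratedFDeriv_le_fnorm {t : ℝ} (ht : 0 < t) (k : ℕ) (f : 𝓢(V, ℝ)) (x : V) :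
    ‖iteratedFDeriv ℝ k f x‖ ≤ (2 * Real.pi / t) ^ k * fnorm 0 t k f := by
  set G : 𝓢(V, ℂ) := 𝓕 (complexify f) with hG
  set H : V → ℂ := fun ξ => G (-ξ) with hH
  have hfH : (fun y => (f y : ℂ)) = 𝓕 H := by
    have h1 : 𝓕⁻ G = complexify f := by simp [hG]
    have h2 : 𝓕⁻ (G : V → ℂ) = 𝓕 H := by
      rw [Real.fourierInv_eq_fourier_comp_neg]
    rw [← h2, ← fourierInv_coe, h1]
    rfl
  have hmoment : ∀ n : ℕ, Integrable (fun v => ‖v‖ ^ n * ‖H v‖) := fun n => by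
    have := (G.integrable_pow_mul volume n).comp_neg
    simpa [hH] using this
  have hH_int : AEStronglyMeasurable H volume :=
    (G.continuous.comp continuous_neg).aestronglyMeasurable
  have h1 : ‖iteratedFDeriv ℝ k f x‖ = ‖iteratedFDeriv ℝ k (fun y => (f y : ℂ)) x‖ := by
    have := Complex.ofRealLI.norm_iteratedFDeriv_comp_left (f := f) (x := x) (i := k)
      ((f.smooth k).contDiffAt) le_rfl
    exact this.symm
  rw [h1, hfH, Real.iteratedFDeriv_fourier (N := k) (fun n _ => hmoment n) hH_int le_rfl]
  refine (VectorFourier.norm_fourierIntegral_le_integral_norm _ _ _ _ _).trans ?_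
  have hT : 0 ≤ 2 * Real.pi / t := by positivity
  have hbound : ∀ v, ‖VectorFourier.fourierPowSMulRight (innerSL ℝ) H v k‖
      ≤ (2 * Real.pi / t) ^ k * (weight 0 t k v * ‖H v‖) := fun v => by
    refine (VectorFourier.norm_fourierPowSMulRight_le (innerSL ℝ) H v k).trans ?_
    have h1 : ‖(innerSL ℝ : V →L[ℝ] V →L[ℝ] ℝ)‖ ≤ 1 := norm_innerSL_le ℝ
    have h2 : (t * ‖v‖) ^ k ≤ (1 + t * ‖v‖) ^ k := by
      apply pow_le_pow_left₀ (by positivity); linarith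
    have h3 : ‖v‖ ^ k ≤ t⁻¹ ^ k * (1 + t * ‖v‖) ^ k := by
      calc ‖v‖ ^ k = t⁻¹ ^ k * (t * ‖v‖) ^ k := by
            rw [← mul_pow]; congr 1; field_simp
        _ ≤ _ := by gcongr
    calc (2 * Real.pi * ‖(innerSL ℝ : V →L[ℝ] V →L[ℝ] ℝ)‖) ^ k * ‖v‖ ^ k * ‖H v‖
        ≤ (2 * Real.pi * 1) ^ k * (t⁻¹ ^ k * (1 + t * ‖v‖) ^ k) * ‖H v‖ := by gcongr
      _ = _ := by simp only [weight, pow_zero, div_eq_mul_inv, mul_pow]; ring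
  have hI : Integrable (fun v => weight 0 t k v * ‖H v‖) := by
    have := (integrable_weight_mul G 0 ht.le k).comp_neg
    simpa [hH, weight] using this
  calc ∫ v, ‖VectorFourier.fourierPowSMulRight (innerSL ℝ) H v k‖
      ≤ ∫ v, (2 * Real.pi / t) ^ k * (weight 0 t k v * ‖H v‖) :=
        integral_mono_of_nonneg (Eventually.of_forall fun _ => norm_nonneg _)
          (hI.const_mul _) (Eventually.of_forall hbound)
    _ = _ := by
      rw [integral_const_mul]
      congr 1
      rw [fnorm, fnormC, ← integral_neg_eq_self]
      simp [hH, weight, hG]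

lemma tendsto_fnorm (a s : ℕ) (f : 𝓢(V, ℝ)) :
    Tendsto (fun t => fnorm a t s f) (𝓝[>] 0) (𝓝 (fnorm a 0 0 f)) := by
  simp only [fnorm, fnormC]
  refine tendsto_integral_filter_of_dominated_convergence
    (fun ξ => weight a 1 s ξ * ‖𝓕 (complexify f) ξ‖) ?_ ?_
    (integrable_weight_mul (𝓕 (complexify f)) a zero_le_one s) ?_
  · refine Eventually.of_forall fun t => Continuous.aestronglyMeasurable ?_
    exact (continuous_weight a t s).mul (𝓕 (complexify f)).continuous.norm
  · filter_upwards [Ioo_mem_nhdsGT (zero_lt_one (α := ℝ))] with t ht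
    refine Eventually.of_forall fun ξ => ?_
    rw [Real.norm_of_nonneg (mul_nonneg (weight_nonneg a ht.1.le s ξ) (norm_nonneg _))]
    gcongr
    exact weight_mono a ht.1.le ht.2.le s ξ
  · refine Eventually.of_forall fun ξ => ?_
    refine Tendsto.mul_const _ ?_
    have : Continuous fun t : ℝ => weight a t s ξ := by unfold weight; fun_prop
    have h := (this.tendsto 0).mono_left (nhdsWithin_le_nhds (s := Ioi 0))
    simpa [weight] using h

lemma fnorm_mono {a b : ℕ} (hab : a ≤ b) {t : ℝ} (ht : 0 ≤ t) (s : ℕ) (f : 𝓢(V, ℝ)) :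
    fnorm a t s f ≤ fnorm b t s f := by
  induction b, hab using Nat.le_induction with
  | base => exact le_rfl
  | succ b _ ih => exact ih.trans (fnorm_succ_le b ht s f)

section Solver

variable {J : Type*} [Fintype J] (b : OrthonormalBasis J ℝ V)

lemma fnorm_lineDeriv_basis_le {t : ℝ} (ht : 0 ≤ t) (s : ℕ) (k : J) (f : 𝓢(V, ℝ)) :
    fnorm 0 t s (∂_{b k} f) ≤ (2 * Real.pi) ^ 2 * fnorm 2 t s f := by
  have h := fnorm_lineDeriv_le 0 ht s (b k) f
  rw [b.norm_eq_one, mul_one] at h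
  refine h.trans ?_
  have h1 := fnorm_succ_le 1 ht s f
  have h0 := fnorm_nonneg 2 ht s f
  have hpi : 1 ≤ 2 * Real.pi := by linarith [Real.pi_gt_three]
  calc 2 * Real.pi * fnorm (0 + 1) t s f ≤ (2 * Real.pi) * fnorm 2 t s f := by gcongr
    _ ≤ _ := by gcongr; nlinarith

lemma fnorm_lineDeriv_lineDeriv_basis_le {t : ℝ} (ht : 0 ≤ t) (s : ℕ) (k l : J) (f : 𝓢(V, ℝ)) :
    fnorm 0 t s (∂_{b k} (∂_{b l} f)) ≤ (2 * Real.pi) ^ 2 * fnorm 2 t s f := by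
  have h := fnorm_lineDeriv_le 0 ht s (b k) (∂_{b l} f)
  have h' := fnorm_lineDeriv_le 1 ht s (b l) f
  rw [b.norm_eq_one, mul_one] at h h'
  calc _ ≤ 2 * Real.pi * fnorm (0 + 1) t s (∂_{b l} f) := h
    _ ≤ 2 * Real.pi * (2 * Real.pi * fnorm 2 t s f) := by gcongr
    _ = _ := by ring

lemma fnorm_laplacian_le (b : OrthonormalBasis J ℝ V) {t : ℝ} (ht : 0 ≤ t) (s : ℕ) (f : 𝓢(V, ℝ)) :
    fnorm 0 t s (Δ f) ≤ Fintype.card J * ((2 * Real.pi) ^ 2 * fnorm 2 t s f) := by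
  rw [laplacian_eq_sum b]
  refine (fnorm_sum_le 0 ht s _ _).trans ?_
  refine (Finset.sum_le_sum fun k _ => fnorm_lineDeriv_lineDeriv_basis_le b ht s k k f).trans ?_
  simp

/-- The bilinear expression whose diagonal value is the tangential part of Günther's splitting. -/
def tangentialForm (k : J) (f g : 𝓢(V, ℝ)) : 𝓢(V, ℝ) := resolvent (mulS (Δ f) (∂_{b k} g))

/-- The bilinear expression whose diagonal value is the normal part of Günther's splitting. -/
def normalForm (k l : J) (f g : 𝓢(V, ℝ)) : 𝓢(V, ℝ) :=
  resolvent (mulS (∂_{b k} f) (∂_{b l} g) + (2 : ℝ) • mulS (Δ f) (∂_{b k} (∂_{b l} g))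
        - (2 : ℝ) • ∑ m, mulS (∂_{b m} (∂_{b k} f)) (∂_{b m} (∂_{b l} g)))

/-- A constant bounding both quadratic forms of Günther's splitting. -/
def formBound (J : Type*) [Fintype J] : ℝ :=
  2 * ((1 + 4 * Fintype.card J) * ((2 * Real.pi) ^ 2 * (2 * Real.pi) ^ 2))

lemma formBound_pos : 0 < formBound J := by unfold formBound; positivity

lemma fnorm_tangentialForm_le {t : ℝ} (ht : 0 ≤ t) (s : ℕ) (k : J) (f g : 𝓢(V, ℝ)) :
    fnorm 2 t s (tangentialForm b k f g) ≤ formBound J * (fnorm 2 t s f * fnorm 2 t s g) := by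
  refine (fnorm_resolvent_le ht s _).trans ?_
  rw [formBound, mul_assoc]
  gcongr
  refine (fnorm_mulS_le 0 ht s _ _).trans ?_
  have h1 := fnorm_laplacian_le b ht s f
  have h2 := fnorm_lineDeriv_basis_le b ht s k g
  have h3 := fnorm_nonneg 2 ht s f
  have h4 := fnorm_nonneg 2 ht s g
  calc _ ≤ (Fintype.card J * ((2 * Real.pi) ^ 2 * fnorm 2 t s f)) *
        ((2 * Real.pi) ^ 2 * fnorm 2 t s g) :=
        mul_le_mul h1 h2 (fnorm_nonneg _ ht _ _) (by positivity)
    _ = (Fintype.card J) * ((2 * Real.pi) ^ 2 * (2 * Real.pi) ^ 2) *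
        (fnorm 2 t s f * fnorm 2 t s g) := by ring
    _ ≤ _ := by
      gcongr
      linarith [(Nat.cast_nonneg (Fintype.card J) : (0 : ℝ) ≤ _)]

lemma fnorm_normalForm_le {t : ℝ} (ht : 0 ≤ t) (s : ℕ) (k l : J) (f g : 𝓢(V, ℝ)) :
    fnorm 2 t s (normalForm b k l f g) ≤ formBound J * (fnorm 2 t s f * fnorm 2 t s g) := by
  refine (fnorm_resolvent_le ht s _).trans ?_
  rw [formBound, mul_assoc]
  gcongr
  have h3 := fnorm_nonneg 2 ht s f
  have h4 := fnorm_nonneg 2 ht s g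
  have hA : fnorm 0 t s (mulS (∂_{b k} f) (∂_{b l} g)) ≤
      ((2 * Real.pi) ^ 2 * fnorm 2 t s f) * ((2 * Real.pi) ^ 2 * fnorm 2 t s g) :=
    (fnorm_mulS_le 0 ht s _ _).trans (mul_le_mul (fnorm_lineDeriv_basis_le b ht s k f)
      (fnorm_lineDeriv_basis_le b ht s l g) (fnorm_nonneg _ ht _ _) (by positivity))
  have hB : fnorm 0 t s ((2 : ℝ) • mulS (Δ f) (∂_{b k} (∂_{b l} g))) ≤
      2 * ((Fintype.card J * ((2 * Real.pi) ^ 2 * fnorm 2 t s f)) *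
        ((2 * Real.pi) ^ 2 * fnorm 2 t s g)) := by
    rw [fnorm_smul, abs_two]
    gcongr
    exact (fnorm_mulS_le 0 ht s _ _).trans (mul_le_mul (fnorm_laplacian_le b ht s f)
      (fnorm_lineDeriv_lineDeriv_basis_le b ht s k l g) (fnorm_nonneg _ ht _ _) (by positivity))
  have hC : fnorm 0 t s ((2 : ℝ) • ∑ m, mulS (∂_{b m} (∂_{b k} f)) (∂_{b m} (∂_{b l} g))) ≤
      2 * (Fintype.card J * (((2 * Real.pi) ^ 2 * fnorm 2 t s f) *
        ((2 * Real.pi) ^ 2 * fnorm 2 t s g))) := by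
    rw [fnorm_smul, abs_two]
    gcongr
    refine (fnorm_sum_le 0 ht s _ _).trans ?_
    refine (Finset.sum_le_sum (g := fun _ => ((2 * Real.pi) ^ 2 * fnorm 2 t s f) *
        ((2 * Real.pi) ^ 2 * fnorm 2 t s g)) fun m _ => ?_).trans (by simp)
    exact (fnorm_mulS_le 0 ht s _ _).trans
      (mul_le_mul (fnorm_lineDeriv_lineDeriv_basis_le b ht s m k f)
      (fnorm_lineDeriv_lineDeriv_basis_le b ht s m l g) (fnorm_nonneg _ ht _ _) (by positivity))
  have hsub := fnorm_sub_le 0 ht s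
    (mulS (∂_{b k} f) (∂_{b l} g) + (2 : ℝ) • mulS (Δ f) (∂_{b k} (∂_{b l} g)))
    ((2 : ℝ) • ∑ m, mulS (∂_{b m} (∂_{b k} f)) (∂_{b m} (∂_{b l} g)))
  have hadd := fnorm_add_le 0 ht s (mulS (∂_{b k} f) (∂_{b l} g))
    ((2 : ℝ) • mulS (Δ f) (∂_{b k} (∂_{b l} g)))
  calc _ ≤ _ := hsub
    _ ≤ ((2 * Real.pi) ^ 2 * fnorm 2 t s f) * ((2 * Real.pi) ^ 2 * fnorm 2 t s g) +
        2 * ((Fintype.card J * ((2 * Real.pi) ^ 2 * fnorm 2 t s f)) *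
        ((2 * Real.pi) ^ 2 * fnorm 2 t s g)) + 2 * (Fintype.card J *
        (((2 * Real.pi) ^ 2 * fnorm 2 t s f) * ((2 * Real.pi) ^ 2 * fnorm 2 t s g))) := by
      linarith
    _ = _ := by ring

lemma mulS_sub_right (f g h : 𝓢(V, ℝ)) : mulS f (g - h) = mulS f g - mulS f h := by
  ext x; simp [mul_sub]

lemma mulS_sub_left (f g h : 𝓢(V, ℝ)) : mulS (f - g) h = mulS f h - mulS g h := by
  ext x; simp [sub_mul]

lemma lineDeriv_sub' (m : V) (f g : 𝓢(V, ℝ)) : ∂_{m} (f - g) = ∂_{m} f - ∂_{m} g :=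
  map_sub (lineDerivOpCLM ℝ 𝓢(V, ℝ) m) f g

lemma laplacian_sub' (f g : 𝓢(V, ℝ)) : Δ (f - g) = Δ f - Δ g :=
  map_sub (laplacianCLM ℝ V 𝓢(V, ℝ)) f g

lemma tangentialForm_sub_right (k : J) (f g h : 𝓢(V, ℝ)) :
    tangentialForm b k f (g - h) = tangentialForm b k f g - tangentialForm b k f h := by
  simp only [tangentialForm, lineDeriv_sub', mulS_sub_right, map_sub]

lemma tangentialForm_sub_left (k : J) (f g h : 𝓢(V, ℝ)) :
    tangentialForm b k (f - g) h = tangentialForm b k f h - tangentialForm b k g h := by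
  simp only [tangentialForm, laplacian_sub', mulS_sub_left, map_sub]

lemma normalForm_sub_right (k l : J) (f g h : 𝓢(V, ℝ)) :
    normalForm b k l f (g - h) = normalForm b k l f g - normalForm b k l f h := by
  simp only [normalForm, lineDeriv_sub', mulS_sub_right, ← map_sub, Finset.sum_sub_distrib]
  congr 1
  module

lemma normalForm_sub_left (k l : J) (f g h : 𝓢(V, ℝ)) :
    normalForm b k l (f - g) h = normalForm b k l f h - normalForm b k l g h := by
  simp only [normalForm, lineDeriv_sub', laplacian_sub', mulS_sub_left, ← map_sub,
    Finset.sum_sub_distrib]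
  congr 1
  module

lemma mul_lineDeriv_eq_forms (k l : J) (f : 𝓢(V, ℝ)) :
    mulS (∂_{b k} f) (∂_{b l} f) =
      -∂_{b k} (tangentialForm b l f f) - ∂_{b l} (tangentialForm b k f f)
        + normalForm b k l f f :=
  mul_lineDeriv_eq b f (b k) (b l)
end Solver

section Solver

variable {ι J : Type*} [Fintype ι] [Fintype J] (b : OrthonormalBasis J ℝ V)

/-- The sum of the norms of the components of a vector valued function. -/
def sysNorm (t : ℝ) (s : ℕ) (v : ι → 𝓢(V, ℝ)) : ℝ := ∑ a, fnorm 2 t s (v a)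

/-- The sum of the norms of the coefficients of a right inverse of the linearized system. -/
def coefNorm (E₁ : ι → J → 𝓢(V, ℝ)) (E₂ : ι → J → J → 𝓢(V, ℝ)) (t : ℝ) (s : ℕ) : ℝ :=
  ∑ a, (∑ j, fnorm 2 t s (E₁ a j) + ∑ k, ∑ l, fnorm 2 t s (E₂ a k l))

/-- The quadratic part of Günther's fixed point equation, polarized. -/
def quadPart (E₁ : ι → J → 𝓢(V, ℝ)) (E₂ : ι → J → J → 𝓢(V, ℝ)) (v w : ι → 𝓢(V, ℝ)) :
    ι → 𝓢(V, ℝ) := fun a =>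
  ∑ j, mulS (E₁ a j) (∑ c, tangentialForm b j (v c) (w c))
    + ∑ k, ∑ l, mulS (E₂ a k l) ((1 / 2 : ℝ) • ∑ c, normalForm b k l (v c) (w c))

/-- The constant term of Günther's fixed point equation. -/
def sourcePart (E₂ : ι → J → J → 𝓢(V, ℝ)) (h : J → J → 𝓢(V, ℝ)) : ι → 𝓢(V, ℝ) := fun a =>
  ∑ k, ∑ l, mulS (E₂ a k l) ((-(1 / 2) : ℝ) • h k l)

/-- The Picard iterates for Günther's fixed point equation. -/
def picard (E₁ : ι → J → 𝓢(V, ℝ)) (E₂ : ι → J → J → 𝓢(V, ℝ)) (h : J → J → 𝓢(V, ℝ)) :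
    ℕ → ι → 𝓢(V, ℝ)
  | 0 => 0
  | n + 1 => sourcePart E₂ h + quadPart b E₁ E₂ (picard E₁ E₂ h n) (picard E₁ E₂ h n)

lemma sysNorm_nonneg {t : ℝ} (ht : 0 ≤ t) (s : ℕ) (v : ι → 𝓢(V, ℝ)) : 0 ≤ sysNorm t s v :=
  Finset.sum_nonneg fun _ _ => fnorm_nonneg _ ht _ _

lemma sysNorm_zero (t : ℝ) (s : ℕ) : sysNorm t s (0 : ι → 𝓢(V, ℝ)) = 0 := by
  simp [sysNorm, fnorm_zero]

lemma sysNorm_add_le {t : ℝ} (ht : 0 ≤ t) (s : ℕ) (v w : ι → 𝓢(V, ℝ)) :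
    sysNorm t s (v + w) ≤ sysNorm t s v + sysNorm t s w := by
  simp only [sysNorm, ← Finset.sum_add_distrib]
  exact Finset.sum_le_sum fun a _ => fnorm_add_le _ ht _ _ _

lemma fnorm_le_sysNorm {t : ℝ} (ht : 0 ≤ t) (s : ℕ) (v : ι → 𝓢(V, ℝ)) (a : ι) :
    fnorm 2 t s (v a) ≤ sysNorm t s v :=
  Finset.single_le_sum (f := fun a => fnorm 2 t s (v a))
    (fun _ _ => fnorm_nonneg _ ht _ _) (Finset.mem_univ a)

lemma coefNorm_nonneg (E₁ : ι → J → 𝓢(V, ℝ)) (E₂ : ι → J → J → 𝓢(V, ℝ)) {t : ℝ} (ht : 0 ≤ t)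
    (s : ℕ) : 0 ≤ coefNorm E₁ E₂ t s := by
  refine Finset.sum_nonneg fun a _ => add_nonneg ?_ ?_
  · exact Finset.sum_nonneg fun j _ => fnorm_nonneg _ ht _ _
  · exact Finset.sum_nonneg fun k _ => Finset.sum_nonneg fun l _ => fnorm_nonneg _ ht _ _

lemma sum_mul_fnorm_le {t : ℝ} (ht : 0 ≤ t) (s : ℕ) (v w : ι → 𝓢(V, ℝ)) :
    ∑ c, fnorm 2 t s (v c) * fnorm 2 t s (w c) ≤ sysNorm t s v * sysNorm t s w := by
  rw [sysNorm, Finset.sum_mul]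
  exact Finset.sum_le_sum fun c _ => mul_le_mul_of_nonneg_left (fnorm_le_sysNorm ht s w c)
    (fnorm_nonneg _ ht _ _)

lemma sysNorm_quadPart_le (E₁ : ι → J → 𝓢(V, ℝ)) (E₂ : ι → J → J → 𝓢(V, ℝ)) {t : ℝ} (ht : 0 ≤ t)
    (s : ℕ) (v w : ι → 𝓢(V, ℝ)) :
    sysNorm t s (quadPart b E₁ E₂ v w) ≤
      formBound J * coefNorm E₁ E₂ t s * (sysNorm t s v * sysNorm t s w) := by
  have hF := (formBound_pos (J := J)).le
  have hNN := mul_nonneg (sysNorm_nonneg ht s v) (sysNorm_nonneg ht s w)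
  set K := formBound J * (sysNorm t s v * sysNorm t s w) with hK
  have hT : ∀ j, fnorm 2 t s (∑ c, tangentialForm b j (v c) (w c)) ≤ K := fun j => by
    refine (fnorm_sum_le 2 ht s _ _).trans ?_
    refine (Finset.sum_le_sum fun c _ => fnorm_tangentialForm_le b ht s j (v c) (w c)).trans ?_
    rw [← Finset.mul_sum]
    exact mul_le_mul_of_nonneg_left (sum_mul_fnorm_le ht s v w) hF
  have hR : ∀ k l, fnorm 2 t s ((1 / 2 : ℝ) • ∑ c, normalForm b k l (v c) (w c)) ≤ K :=
      fun k l => by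
    have h1 : fnorm 2 t s (∑ c, normalForm b k l (v c) (w c)) ≤ K := by
      refine (fnorm_sum_le 2 ht s _ _).trans ?_
      refine (Finset.sum_le_sum fun c _ => fnorm_normalForm_le b ht s k l (v c) (w c)).trans ?_
      rw [← Finset.mul_sum]
      exact mul_le_mul_of_nonneg_left (sum_mul_fnorm_le ht s v w) hF
    rw [fnorm_smul, abs_of_pos (by norm_num)]
    linarith [fnorm_nonneg 2 ht s (∑ c, normalForm b k l (v c) (w c))]
  have key : ∀ a, fnorm 2 t s (quadPart b E₁ E₂ v w a) ≤
      (∑ j, fnorm 2 t s (E₁ a j) + ∑ k, ∑ l, fnorm 2 t s (E₂ a k l)) * K := fun a => by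
    refine (fnorm_add_le 2 ht s _ _).trans ?_
    rw [add_mul, Finset.sum_mul, Finset.sum_mul]
    refine add_le_add ?_ ?_
    · refine (fnorm_sum_le 2 ht s _ _).trans (Finset.sum_le_sum fun j _ => ?_)
      exact (fnorm_mulS_le 2 ht s _ _).trans
        (mul_le_mul_of_nonneg_left (hT j) (fnorm_nonneg _ ht _ _))
    · refine (fnorm_sum_le 2 ht s _ _).trans (Finset.sum_le_sum fun k _ => ?_)
      rw [Finset.sum_mul]
      refine (fnorm_sum_le 2 ht s _ _).trans (Finset.sum_le_sum fun l _ => ?_)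
      exact (fnorm_mulS_le 2 ht s _ _).trans
        (mul_le_mul_of_nonneg_left (hR k l) (fnorm_nonneg _ ht _ _))
  refine (Finset.sum_le_sum fun a _ => key a).trans (le_of_eq ?_)
  rw [← Finset.sum_mul, hK, coefNorm]
  ring

lemma quadPart_sub (E₁ : ι → J → 𝓢(V, ℝ)) (E₂ : ι → J → J → 𝓢(V, ℝ)) (v w : ι → 𝓢(V, ℝ)) :
    quadPart b E₁ E₂ v v - quadPart b E₁ E₂ w w =
      quadPart b E₁ E₂ v (v - w) + quadPart b E₁ E₂ (v - w) w := by
  ext a x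
  simp only [quadPart, Pi.sub_apply, Pi.add_apply, tangentialForm_sub_left,
    tangentialForm_sub_right, normalForm_sub_left, normalForm_sub_right, Finset.sum_sub_distrib,
    smul_sub, mulS_sub_right, _root_.add_apply, _root_.sub_apply]
  ring

section Convergence

variable (E₁ : ι → J → 𝓢(V, ℝ)) (E₂ : ι → J → J → 𝓢(V, ℝ)) (h : J → J → 𝓢(V, ℝ))

lemma sysNorm_picard_le {t : ℝ} (ht : 0 ≤ t) (s : ℕ)
    (hsmall : 8 * (formBound J * coefNorm E₁ E₂ t s) * sysNorm t s (sourcePart E₂ h) ≤ 1) (n : ℕ) :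
    sysNorm t s (picard b E₁ E₂ h n) ≤ 2 * sysNorm t s (sourcePart E₂ h) := by
  set S := sysNorm t s (sourcePart E₂ h) with hS
  have hS0 : 0 ≤ S := sysNorm_nonneg ht s _
  set C := formBound J * coefNorm E₁ E₂ t s with hC
  have hC0 : 0 ≤ C := mul_nonneg formBound_pos.le (coefNorm_nonneg _ _ ht s)
  induction n with
  | zero => simp only [picard, sysNorm_zero]; positivity
  | succ n ih =>
    have h0 := sysNorm_nonneg ht s (picard b E₁ E₂ h n)
    calc _ ≤ S + C * (sysNorm t s (picard b E₁ E₂ h n) * sysNorm t s (picard b E₁ E₂ h n)) :=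
          (sysNorm_add_le ht s _ _).trans
            (add_le_add le_rfl (sysNorm_quadPart_le b E₁ E₂ ht s _ _))
      _ ≤ S + C * ((2 * S) * (2 * S)) := by gcongr
      _ ≤ _ := by nlinarith

lemma sysNorm_picard_sub_le {t : ℝ} (ht : 0 ≤ t) (s : ℕ)
    (hsmall : 8 * (formBound J * coefNorm E₁ E₂ t s) * sysNorm t s (sourcePart E₂ h) ≤ 1) (n : ℕ) :
    sysNorm t s (picard b E₁ E₂ h (n + 1) - picard b E₁ E₂ h n) ≤
      2 * sysNorm t s (sourcePart E₂ h) * (1 / 2) ^ n := by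
  have hb := sysNorm_picard_le b E₁ E₂ h ht s hsmall
  set S := sysNorm t s (sourcePart E₂ h) with hS
  have hS0 : 0 ≤ S := sysNorm_nonneg ht s _
  set C := formBound J * coefNorm E₁ E₂ t s with hC
  have hC0 : 0 ≤ C := mul_nonneg formBound_pos.le (coefNorm_nonneg _ _ ht s)
  induction n with
  | zero => simpa [picard] using hb 1
  | succ n ih =>
    set D := picard b E₁ E₂ h (n + 1) - picard b E₁ E₂ h n with hD
    have hD0 := sysNorm_nonneg ht s D
    have heq : picard b E₁ E₂ h (n + 1 + 1) - picard b E₁ E₂ h (n + 1) =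
        quadPart b E₁ E₂ (picard b E₁ E₂ h (n + 1)) D
          + quadPart b E₁ E₂ D (picard b E₁ E₂ h n) := by
      rw [hD, ← quadPart_sub]
      exact add_sub_add_left_eq_sub _ _ (sourcePart E₂ h)
    rw [heq]
    calc _ ≤ C * (sysNorm t s (picard b E₁ E₂ h (n + 1)) * sysNorm t s D)
          + C * (sysNorm t s D * sysNorm t s (picard b E₁ E₂ h n)) :=
          (sysNorm_add_le ht s _ _).trans
            (add_le_add (sysNorm_quadPart_le b E₁ E₂ ht s _ _)
              (sysNorm_quadPart_le b E₁ E₂ ht s _ _))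
      _ ≤ C * ((2 * S) * sysNorm t s D) + C * (sysNorm t s D * (2 * S)) := by
          gcongr
          · exact hb _
          · exact hb _
      _ = (8 * C * S) * sysNorm t s D / 2 := by ring
      _ ≤ 1 * sysNorm t s D / 2 := by gcongr
      _ ≤ 1 * (2 * S * (1 / 2) ^ n) / 2 := by gcongr
      _ = _ := by ring

lemma exists_bound_iteratedFDeriv_picard_sub
    (hsmall : 8 * (formBound J * coefNorm E₁ E₂ 0 0) * sysNorm 0 0 (sourcePart E₂ h) < 1) (k : ℕ)
    (a : ι) : ∃ c : ℝ, ∀ n x,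
      ‖iteratedFDeriv ℝ k (picard b E₁ E₂ h (n + 1) a - picard b E₁ E₂ h n a : 𝓢(V, ℝ)) x‖
        ≤ c * (1 / 2) ^ n := by
  have hlim : Tendsto (fun t => 8 * (formBound J * coefNorm E₁ E₂ t k) *
      sysNorm t k (sourcePart E₂ h)) (𝓝[>] 0)
      (𝓝 (8 * (formBound J * coefNorm E₁ E₂ 0 0) * sysNorm 0 0 (sourcePart E₂ h))) := by
    refine ((Tendsto.const_mul _ ?_).const_mul _).mul ?_
    · refine tendsto_finsetSum _ fun a _ => Tendsto.add ?_ ?_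
      · exact tendsto_finsetSum _ fun j _ => tendsto_fnorm 2 k _
      · exact tendsto_finsetSum _ fun j _ => tendsto_finsetSum _ fun l _ => tendsto_fnorm 2 k _
    · exact tendsto_finsetSum _ fun j _ => tendsto_fnorm 2 k _
  obtain ⟨t, ht, ht0⟩ := ((hlim.eventually (gt_mem_nhds hsmall)).and self_mem_nhdsWithin).exists
  have ht0 : 0 < t := ht0
  refine ⟨(2 * Real.pi / t) ^ k * (2 * sysNorm t k (sourcePart E₂ h)), fun n x => ?_⟩
  refine (norm_iteratedFDeriv_le_fnorm ht0 k _ x).trans ?_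
  rw [mul_assoc]
  gcongr
  refine (fnorm_mono (Nat.zero_le 2) ht0.le k _).trans ?_
  exact (fnorm_le_sysNorm ht0.le k (picard b E₁ E₂ h (n + 1) - picard b E₁ E₂ h n) a).trans
    (sysNorm_picard_sub_le b E₁ E₂ h ht0.le k ht.le n)

end Convergence

lemma exists_smooth_limit (v : ℕ → 𝓢(V, ℝ)) (h0 : v 0 = 0)
    (hv : ∀ k : ℕ, ∃ c : ℝ, ∀ n x,
      ‖iteratedFDeriv ℝ k (v (n + 1) - v n : 𝓢(V, ℝ)) x‖ ≤ c * (1 / 2) ^ n) :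
    ∃ f : V → ℝ, ContDiff ℝ (⊤ : ℕ∞) f ∧
      ∀ x m, Tendsto (fun n => (∂_{m} (v n) : 𝓢(V, ℝ)) x) atTop (𝓝 (fderiv ℝ f x m)) := by
  choose c hc using hv
  have hsum : ∀ k, Summable fun n : ℕ => c k * (1 / 2) ^ n := fun k =>
    (summable_geometric_of_lt_one (by norm_num) (by norm_num)).mul_left _
  let w : ℕ → V → ℝ := fun n => ⇑(v (n + 1) - v n)
  have hw : ∀ n, ContDiff ℝ (⊤ : ℕ∞) (w n) := fun n => (v (n + 1) - v n).smooth _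
  refine ⟨fun x => ∑' n, w n x, contDiff_tsum hw (fun k _ => hsum k)
    (fun k n x _ => hc k n x), fun x m => ?_⟩
  have hfd : ∀ n y, ‖fderiv ℝ (w n) y‖ ≤ c 1 * (1 / 2) ^ n := fun n y => by
    rw [← norm_iteratedFDeriv_one]; exact hc 1 n y
  have hpt : ∀ n y, ‖w n y‖ ≤ c 0 * (1 / 2) ^ n := fun n y => by
    rw [← norm_iteratedFDeriv_zero (𝕜 := ℝ)]; exact hc 0 n y
  have hts := fderiv_tsum (hsum 1) (fun n => (hw n).differentiable (by simp)) hfd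
    (x₀ := 0) (Summable.of_norm_bounded (hsum 0) fun n => hpt n 0)
  have hs : Summable fun n => fderiv ℝ (w n) x := Summable.of_norm_bounded (hsum 1) (hfd · x)
  have h1 := ((ContinuousLinearMap.apply ℝ ℝ m).continuous.tendsto _).comp
    hs.hasSum.tendsto_sum_nat
  have h2 : fderiv ℝ (fun x => ∑' n, w n x) x = ∑' n, fderiv ℝ (w n) x := congrFun hts x
  rw [h2]
  refine h1.congr fun n => ?_
  have h3 : ∀ k, fderiv ℝ (w k) x m = ∂_{m} (v (k + 1)) x - ∂_{m} (v k) x := fun k => by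
    have : ∂_{m} (v (k + 1) - v k) x = fderiv ℝ (w k) x m := lineDerivOp_apply_eq_fderiv _ _ _
    rw [← this, lineDeriv_sub', _root_.sub_apply]
  have h4 : ∂_{m} (v 0) x = 0 := by
    have : ∂_{m} (0 : 𝓢(V, ℝ)) = 0 := map_zero (lineDerivOpCLM ℝ 𝓢(V, ℝ) m)
    rw [h0, this]; rfl
  simp only [Function.comp, map_sum, ContinuousLinearMap.apply_apply, h3]
  rw [Finset.sum_range_sub (fun k => (∂_{m} (v k) : 𝓢(V, ℝ)) x), h4, sub_zero]

end Solver

section Solver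

variable {ι J : Type*} [Fintype ι] [Fintype J] (b : OrthonormalBasis J ℝ V)

lemma normalForm_comm (k l : J) (f : 𝓢(V, ℝ)) :
    normalForm b k l f f = normalForm b l k f f := by
  simp only [normalForm]
  congr 1
  rw [lineDeriv_comm (b k) (b l)]
  ext x
  simp only [_root_.add_apply, _root_.sub_apply, _root_.smul_apply, mulS_apply, _root_.sum_apply]
  congr 2
  · ring
  · exact Finset.sum_congr rfl fun m _ => mul_comm _ _

lemma sysNorm_sourcePart_le (E₁ : ι → J → 𝓢(V, ℝ)) (E₂ : ι → J → J → 𝓢(V, ℝ))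
    (h : J → J → 𝓢(V, ℝ)) {δ : ℝ} (hδ : 0 ≤ δ) (hh : ∀ i j, fnorm 2 0 0 (h i j) ≤ δ) :
    sysNorm 0 0 (sourcePart E₂ h) ≤ coefNorm E₁ E₂ 0 0 * δ := by
  rw [sysNorm, coefNorm, Finset.sum_mul]
  refine Finset.sum_le_sum fun a _ => ?_
  have h1 : fnorm 2 0 0 (sourcePart E₂ h a) ≤ (∑ k, ∑ l, fnorm 2 0 0 (E₂ a k l)) * δ := by
    rw [Finset.sum_mul]
    refine (fnorm_sum_le 2 le_rfl 0 _ _).trans (Finset.sum_le_sum fun k _ => ?_)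
    rw [Finset.sum_mul]
    refine (fnorm_sum_le 2 le_rfl 0 _ _).trans (Finset.sum_le_sum fun l _ => ?_)
    refine (fnorm_mulS_le 2 le_rfl 0 _ _).trans
      (mul_le_mul_of_nonneg_left ?_ (fnorm_nonneg _ le_rfl _ _))
    rw [fnorm_smul, abs_neg, abs_of_pos (by norm_num)]
    linarith [hh k l]
  refine h1.trans (mul_le_mul_of_nonneg_right ?_ hδ)
  have : 0 ≤ ∑ j, fnorm 2 0 0 (E₁ a j) := Finset.sum_nonneg fun j _ => fnorm_nonneg _ le_rfl _ _
  linarith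

/-- One step of the iteration solves the linearized equation modulo the quadratic error. -/
lemma picard_succ_linearized {D₁ : ι → J → V → ℝ} {D₂ : ι → J → J → V → ℝ}
    (E₁ : ι → J → 𝓢(V, ℝ)) (E₂ : ι → J → J → 𝓢(V, ℝ)) {O : Set V} (hO : IsOpen O)
    (hD : ∀ a i x, DifferentiableAt ℝ (D₁ a i) x)
    (hD₂ : ∀ a i j x, fderiv ℝ (D₁ a i) x (b j) = D₂ a i j x)
    (hE : ∀ x ∈ O, ∀ (q : J → ℝ) (s : J → J → ℝ), (∀ i j, s i j = s j i) →
      (∀ j, ∑ a, D₁ a j x * (∑ k, E₁ a k x * q k + ∑ k, ∑ l, E₂ a k l x * s k l) = q j) ∧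
      (∀ i j, ∑ a, D₂ a i j x * (∑ k, E₁ a k x * q k + ∑ k, ∑ l, E₂ a k l x * s k l) = s i j))
    (h : J → J → 𝓢(V, ℝ)) (hsymm : ∀ i j, h i j = h j i) (n : ℕ) {x : V} (hx : x ∈ O) (i j : J) :
    ∑ a, (D₁ a i x * ∂_{b j} (picard b E₁ E₂ h (n + 1) a) x
        + D₁ a j x * ∂_{b i} (picard b E₁ E₂ h (n + 1) a) x) =
      h i j x - ∑ a, ∂_{b i} (picard b E₁ E₂ h n a) x * ∂_{b j} (picard b E₁ E₂ h n a) x := by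
  set w := picard b E₁ E₂ h n with hw
  set v := picard b E₁ E₂ h (n + 1) with hv
  let q : J → 𝓢(V, ℝ) := fun k => ∑ c, tangentialForm b k (w c) (w c)
  let N : J → J → 𝓢(V, ℝ) := fun k l => ∑ c, normalForm b k l (w c) (w c)
  let s : J → J → V → ℝ := fun k l y => (1 / 2) * (N k l y - h k l y)
  have hs : ∀ y k l, s k l y = s l k y := fun y k l => by
    simp only [s, N, hsymm k l, normalForm_comm b k l]
  have hvy : ∀ a y, v a y = ∑ k, E₁ a k y * q k y + ∑ k, ∑ l, E₂ a k l y * s k l y := by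
    intro a y
    have : v a = sourcePart E₂ h a + quadPart b E₁ E₂ w w a := rfl
    rw [this, quadPart, sourcePart]
    simp only [_root_.add_apply, _root_.sum_apply, mulS_apply, _root_.smul_apply, q, s, N,
      smul_eq_mul]
    rw [add_left_comm, ← Finset.sum_add_distrib]
    congr 1
    refine Finset.sum_congr rfl fun k _ => ?_
    rw [← Finset.sum_add_distrib]
    refine Finset.sum_congr rfl fun l _ => ?_
    ring
  have hq : ∀ y ∈ O, ∀ k, ∑ a, D₁ a k y * v a y = q k y := fun y hy k => by
    simp only [hvy]
    exact (hE y hy (fun k => q k y) (fun k l => s k l y) (hs y)).1 k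
  have hs2 : ∀ k l, ∑ a, D₂ a k l x * v a x = s k l x := fun k l => by
    simp only [hvy]
    exact (hE x hx (fun k => q k x) (fun k l => s k l x) (hs x)).2 k l
  have hder : ∀ k l, ∑ a, D₁ a k x * ∂_{b l} (v a) x = ∂_{b l} (q k) x - s k l x := fun k l => by
    have h1 : HasFDerivAt (fun y => ∑ a, D₁ a k y * v a y)
        (∑ a, (D₁ a k x • fderiv ℝ (v a) x + v a x • fderiv ℝ (D₁ a k) x)) x :=
      HasFDerivAt.fun_sum fun a _ => (hD a k x).hasFDerivAt.mul ((v a).hasFDerivAt x)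
    have h2 : HasFDerivAt (fun y => ∑ a, D₁ a k y * v a y) (fderiv ℝ (q k) x) x :=
      ((q k).hasFDerivAt x).congr_of_eventuallyEq
        (by filter_upwards [hO.mem_nhds hx] with y hy using hq y hy k)
    have h3 := congrArg (fun L : V →L[ℝ] ℝ => L (b l)) (h1.unique h2)
    simp only [_root_.sum_apply, _root_.add_apply, _root_.smul_apply, smul_eq_mul, hD₂,
      Finset.sum_add_distrib] at h3
    simp only [lineDerivOp_apply_eq_fderiv]
    rw [← h3, ← hs2 k l]
    simp only [mul_comm (v _ x)]
    ring
  have hquad : ∑ a, ∂_{b i} (w a) x * ∂_{b j} (w a) x =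
      -∂_{b i} (q j) x - ∂_{b j} (q i) x + N i j x := by
    have hdq : ∀ k l, ∂_{b k} (q l) x = ∑ c, ∂_{b k} (tangentialForm b l (w c) (w c)) x :=
      fun k l => by
        have := map_sum (lineDerivOpCLM ℝ 𝓢(V, ℝ) (b k))
          (fun c => tangentialForm b l (w c) (w c)) Finset.univ
        have h2 := congrArg (fun f : 𝓢(V, ℝ) => f x) this
        simp only [_root_.sum_apply] at h2
        exact h2
    rw [hdq, hdq, _root_.sum_apply, ← Finset.sum_neg_distrib, ← Finset.sum_sub_distrib,
      ← Finset.sum_add_distrib]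
    refine Finset.sum_congr rfl fun c _ => ?_
    exact congrArg (fun f : 𝓢(V, ℝ) => f x) (mul_lineDeriv_eq_forms b i j (w c))
  rw [Finset.sum_add_distrib, hder i j, hder j i, hquad, hs x j i]
  simp only [s]
  ring

/-- **Günther's perturbation theorem.** Near a free map, every sufficiently small change of the
induced metric is realized by a smooth perturbation of the map. -/
theorem exists_perturbation {D₁ : ι → J → V → ℝ} {D₂ : ι → J → J → V → ℝ}
    (E₁ : ι → J → 𝓢(V, ℝ)) (E₂ : ι → J → J → 𝓢(V, ℝ)) {O : Set V} (hO : IsOpen O)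
    (hD : ∀ a i x, DifferentiableAt ℝ (D₁ a i) x)
    (hD₂ : ∀ a i j x, fderiv ℝ (D₁ a i) x (b j) = D₂ a i j x)
    (hE : ∀ x ∈ O, ∀ (q : J → ℝ) (s : J → J → ℝ), (∀ i j, s i j = s j i) →
      (∀ j, ∑ a, D₁ a j x * (∑ k, E₁ a k x * q k + ∑ k, ∑ l, E₂ a k l x * s k l) = q j) ∧
      (∀ i j, ∑ a, D₂ a i j x * (∑ k, E₁ a k x * q k + ∑ k, ∑ l, E₂ a k l x * s k l) = s i j)) :
    ∃ δ > 0, ∀ h : J → J → 𝓢(V, ℝ), (∀ i j, h i j = h j i) → (∀ i j, fnorm 2 0 0 (h i j) ≤ δ) →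
      ∃ v : ι → V → ℝ, (∀ a, ContDiff ℝ (⊤ : ℕ∞) (v a)) ∧ ∀ x ∈ O, ∀ i j,
        ∑ a, (D₁ a i x + fderiv ℝ (v a) x (b i)) * (D₁ a j x + fderiv ℝ (v a) x (b j)) =
          ∑ a, D₁ a i x * D₁ a j x + h i j x := by
  set F := formBound J with hF
  set C := coefNorm E₁ E₂ 0 0 with hC
  have hF0 : 0 < F := formBound_pos
  have hC0 : 0 ≤ C := coefNorm_nonneg _ _ le_rfl 0
  have hden : 0 < 8 * F * C ^ 2 + 1 := by positivity
  refine ⟨1 / (8 * F * C ^ 2 + 1), by positivity, fun h hsymm hh => ?_⟩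
  have hsmall : 8 * (F * C) * sysNorm 0 0 (sourcePart E₂ h) < 1 := by
    have h1 := sysNorm_sourcePart_le E₁ E₂ h (by positivity) hh
    calc _ ≤ 8 * (F * C) * (C * (1 / (8 * F * C ^ 2 + 1))) := by gcongr
      _ = (8 * F * C ^ 2) / (8 * F * C ^ 2 + 1) := by ring
      _ < 1 := by rw [div_lt_one hden]; linarith
  have hlim := fun a => exists_smooth_limit (fun n => picard b E₁ E₂ h n a) rfl
    (fun k => exists_bound_iteratedFDeriv_picard_sub b E₁ E₂ h hsmall k a)
  choose v hv hvlim using hlim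
  refine ⟨v, hv, fun x hx i j => ?_⟩
  have hstep : ∀ n, ∑ a, (D₁ a i x + ∂_{b i} (picard b E₁ E₂ h (n + 1) a) x) *
        (D₁ a j x + ∂_{b j} (picard b E₁ E₂ h (n + 1) a) x) =
      ∑ a, D₁ a i x * D₁ a j x + h i j x
        - ∑ a, ∂_{b i} (picard b E₁ E₂ h n a) x * ∂_{b j} (picard b E₁ E₂ h n a) x
        + ∑ a, ∂_{b i} (picard b E₁ E₂ h (n + 1) a) x * ∂_{b j} (picard b E₁ E₂ h (n + 1) a) x :=
      fun n => by
    rw [add_sub_assoc, ← picard_succ_linearized b E₁ E₂ hO hD hD₂ hE h hsymm n hx i j]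
    simp only [← Finset.sum_add_distrib]
    refine Finset.sum_congr rfl fun a _ => ?_
    ring
  have hquad : Tendsto (fun n => ∑ a, (∂_{b i} (picard b E₁ E₂ h n a) : 𝓢(V, ℝ)) x *
      (∂_{b j} (picard b E₁ E₂ h n a) : 𝓢(V, ℝ)) x) atTop
      (𝓝 (∑ a, fderiv ℝ (v a) x (b i) * fderiv ℝ (v a) x (b j))) :=
    tendsto_finsetSum _ fun a _ => (hvlim a x (b i)).mul (hvlim a x (b j))
  have hl : Tendsto (fun n => ∑ a, (D₁ a i x + (∂_{b i} (picard b E₁ E₂ h (n + 1) a) : 𝓢(V, ℝ)) x) *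
        (D₁ a j x + (∂_{b j} (picard b E₁ E₂ h (n + 1) a) : 𝓢(V, ℝ)) x)) atTop
      (𝓝 (∑ a, (D₁ a i x + fderiv ℝ (v a) x (b i)) * (D₁ a j x + fderiv ℝ (v a) x (b j)))) :=
    tendsto_finsetSum _ fun a _ =>
      (((hvlim a x (b i)).comp (tendsto_add_atTop_nat 1)).const_add _).mul
        (((hvlim a x (b j)).comp (tendsto_add_atTop_nat 1)).const_add _)
  have hr := ((hquad.const_sub (∑ a, D₁ a i x * D₁ a j x + h i j x)).add
    (hquad.comp (tendsto_add_atTop_nat 1)))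
  rw [sub_add_cancel] at hr
  exact tendsto_nhds_unique (hl.congr hstep) hr

end Solver

lemma fnorm_dilation_le {ρ : ℝ} (hρ : 0 < ρ) (hρ1 : ρ ≤ 1) (f g : 𝓢(V, ℝ))
    (hfg : ∀ x, g x = f (ρ⁻¹ • x)) : fnorm 2 0 0 g ≤ (ρ ^ 2)⁻¹ * fnorm 2 0 0 f := by
  have hF : ∀ ξ, 𝓕 (complexify g) ξ =
      (ρ ^ Module.finrank ℝ V : ℝ) • 𝓕 (complexify f) (ρ • ξ) := fun ξ => by
    rw [fourier_coe, fourier_coe, Real.fourier_eq', Real.fourier_eq']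
    rw [← Measure.integral_comp_inv_smul_of_nonneg volume _ hρ.le]
    refine integral_congr_ae (Eventually.of_forall fun x => ?_)
    simp only [complexify_apply, hfg, inner_smul_left, inner_smul_right]
    congr 3
    have : (ρ : ℂ) ≠ 0 := by exact_mod_cast hρ.ne'
    simp
    field_simp
  have hI := integrable_weight_mul (𝓕 (complexify f)) 2 (le_refl (0 : ℝ)) 0
  calc fnorm 2 0 0 g
      = ∫ ξ, ρ ^ Module.finrank ℝ V * ((1 + ρ⁻¹ * ‖ρ • ξ‖) ^ 2 * ‖𝓕 (complexify f) (ρ • ξ)‖) := by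
        rw [fnorm, fnormC]
        refine integral_congr_ae (Eventually.of_forall fun ξ => ?_)
        simp only [hF, weight, norm_smul, Real.norm_eq_abs, abs_of_pos hρ, abs_pow]
        rw [inv_mul_cancel_left₀ hρ.ne']
        ring
    _ = ∫ η, (1 + ρ⁻¹ * ‖η‖) ^ 2 * ‖𝓕 (complexify f) η‖ := by
        rw [integral_const_mul, Measure.integral_comp_smul_of_nonneg volume
          (fun η => (1 + ρ⁻¹ * ‖η‖) ^ 2 * ‖𝓕 (complexify f) η‖) ρ (hR := hρ.le), smul_eq_mul,
          mul_inv_cancel_left₀ (pow_ne_zero _ hρ.ne')]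
    _ ≤ ∫ η, (ρ ^ 2)⁻¹ * (weight 2 0 0 η * ‖𝓕 (complexify f) η‖) := by
        refine integral_mono_of_nonneg (Eventually.of_forall fun η => by positivity)
          (hI.const_mul _) (Eventually.of_forall fun η => ?_)
        simp only [weight, pow_zero, mul_one]
        rw [← mul_assoc, ← inv_pow, ← mul_pow]
        gcongr
        have : 1 ≤ ρ⁻¹ := (one_le_inv₀ hρ).2 hρ1
        linarith
    _ = _ := by rw [integral_const_mul]; rfl

/-- The weighted Fourier norm is dominated by a continuous function on Schwartz space. -/
lemma exists_continuous_fnorm_le : ∃ Q : 𝓢(V, ℝ) → ℝ, Continuous Q ∧ Q 0 = 0 ∧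
    ∀ f, fnorm 2 0 0 f ≤ Q f := by
  set r := Module.finrank ℝ V + 1
  let S : Seminorm ℝ 𝓢(V, ℂ) :=
    (Finset.Iic (r + 2, 0)).sup fun m => SchwartzMap.seminorm ℝ m.1 m.2
  have hS : Continuous S := by
    refine Seminorm.continuous_finsetSup fun m _ => ?_
    exact (schwartz_withSeminorms ℝ V ℂ).continuous_seminorm m
  let T : 𝓢(V, ℝ) →L[ℝ] 𝓢(V, ℂ) :=
    ((fourierCLM ℂ 𝓢(V, ℂ)).restrictScalars ℝ).comp complexify
  have hI : Integrable (fun ξ : V => (1 + ‖ξ‖) ^ (-(r : ℝ))) :=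
    integrable_one_add_norm (by simp [r])
  refine ⟨fun f => (∫ ξ : V, (1 + ‖ξ‖) ^ (-(r : ℝ))) * (2 ^ (r + 2) * S (T f)), ?_, ?_, ?_⟩
  · exact continuous_const.mul (continuous_const.mul (hS.comp T.continuous))
  · simp
  · intro f
    dsimp only
    rw [← integral_mul_const]
    refine integral_mono_of_nonneg (Eventually.of_forall fun ξ =>
      mul_nonneg (weight_nonneg _ le_rfl _ _) (norm_nonneg _)) (hI.mul_const _)
      (Eventually.of_forall fun ξ => ?_)
    have h := one_add_le_sup_seminorm_apply (𝕜 := ℝ) (m := (r + 2, 0)) (k := r + 2) (n := 0)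
      le_rfl le_rfl (T f) ξ
    rw [norm_iteratedFDeriv_zero] at h
    have h0 : 0 < 1 + ‖ξ‖ := by positivity
    dsimp only
    rw [Real.rpow_neg h0.le, Real.rpow_natCast, inv_mul_eq_div, le_div_iff₀ (by positivity)]
    refine le_trans (le_of_eq ?_) h
    simp only [weight, pow_zero, mul_one, pow_add]
    change _ = _ * ‖𝓕 (complexify f) ξ‖
    ring

lemma exists_norm_iteratedFDeriv_comp_smul_le {F : V → ℝ} (hF : ContDiff ℝ (⊤ : ℕ∞) F)
    (hF0 : F 0 = 0) (R : ℝ) (m : ℕ) : ∃ K : ℝ, ∀ ε ∈ Icc (0 : ℝ) 1, ∀ x ∈ Metric.closedBall (0 : V) R,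
      ‖iteratedFDeriv ℝ m (fun y => F (ε • y)) x‖ ≤ ε * K := by
  have hK : IsCompact (Metric.closedBall (0 : V) R) := isCompact_closedBall 0 R
  have hmem : ∀ ε ∈ Icc (0 : ℝ) 1, ∀ x ∈ Metric.closedBall (0 : V) R,
      ε • x ∈ Metric.closedBall (0 : V) R := fun ε hε x hx => by
    rw [mem_closedBall_zero_iff] at hx ⊢
    rw [norm_smul, Real.norm_of_nonneg hε.1]
    nlinarith [norm_nonneg x, hε.1, hε.2]
  rcases Nat.eq_zero_or_pos m with rfl | hm
  · obtain ⟨K, hKb⟩ := hK.exists_bound_of_continuousOn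
      (hF.continuous_fderiv (by simp)).continuousOn
    refine ⟨K * R, fun ε hε x hx => ?_⟩
    rw [norm_iteratedFDeriv_zero]
    have hxR := mem_closedBall_zero_iff.1 hx
    have hR : 0 ≤ R := (norm_nonneg x).trans hxR
    have h0 : (0 : V) ∈ Metric.closedBall (0 : V) R := by simpa using hR
    have hK0 : 0 ≤ K := (norm_nonneg _).trans (hKb 0 h0)
    have := (convex_closedBall (0 : V) R).norm_image_sub_le_of_norm_fderiv_le
      (fun y _ => hF.differentiable (by simp) y) hKb h0 (hmem ε hε x hx)
    rw [hF0, sub_zero, sub_zero, norm_smul, Real.norm_of_nonneg hε.1] at this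
    calc _ ≤ _ := this
      _ ≤ K * (ε * R) := by gcongr; exact hε.1
      _ = _ := by ring
  · obtain ⟨K, hKb⟩ := hK.exists_bound_of_continuousOn
      (hF.continuous_iteratedFDeriv (m := m) (by exact_mod_cast le_top)).continuousOn
    refine ⟨K, fun ε hε x hx => ?_⟩
    have h1 := (ε • ContinuousLinearMap.id ℝ V).iteratedFDeriv_comp_right (f := F) hF x (i := m)
      (by exact_mod_cast le_top)
    have h2 : F ∘ (ε • ContinuousLinearMap.id ℝ V) = fun y => F (ε • y) := rfl
    rw [h2] at h1
    rw [h1]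
    refine (ContinuousMultilinearMap.norm_compContinuousLinearMap_le _ _).trans ?_
    have h3 : ‖ε • ContinuousLinearMap.id ℝ V‖ ≤ ε := by
      rw [norm_smul, Real.norm_of_nonneg hε.1]
      exact mul_le_of_le_one_right hε.1 ContinuousLinearMap.norm_id_le
    have h4 := hKb _ (hmem ε hε x hx)
    have hK0 : 0 ≤ K := (norm_nonneg _).trans h4
    rw [Finset.prod_const, Finset.card_univ, Fintype.card_fin, mul_comm]
    refine mul_le_mul ?_ h4 (norm_nonneg _) hε.1
    calc ‖ε • ContinuousLinearMap.id ℝ V‖ ^ m ≤ ε ^ m := by gcongr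
      _ ≤ ε := pow_le_of_le_one hε.1 hε.2 hm.ne'

lemma tendsto_seminorm_mul_comp_smul {χ F : V → ℝ} (hχ : ContDiff ℝ (⊤ : ℕ∞) χ)
    (hχc : HasCompactSupport χ) (hF : ContDiff ℝ (⊤ : ℕ∞) F) (hF0 : F 0 = 0)
    (f : ℝ → 𝓢(V, ℝ)) (hf : ∀ ε x, f ε x = χ x * F (ε • x)) :
    Tendsto f (𝓝[>] 0) (𝓝 0) := by
  rw [(schwartz_withSeminorms ℝ V ℝ).tendsto_nhds]
  rintro ⟨k, n⟩ δ hδ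
  obtain ⟨R, hR⟩ := hχc.isCompact.isBounded.subset_closedBall (0 : V)
  choose K hK using exists_norm_iteratedFDeriv_comp_smul_le hF hF0 R
  have hb : ∀ i, ∃ M, ∀ x, ‖iteratedFDeriv ℝ i χ x‖ ≤ M := fun i =>
    (hχ.continuous_iteratedFDeriv (m := i)
      (by exact_mod_cast le_top)).bounded_above_of_compact_support (hχc.iteratedFDeriv i)
  choose M hM using hb
  have hM0 : ∀ i, 0 ≤ M i := fun i => (norm_nonneg _).trans (hM i 0)
  set C : ℝ := |R| ^ k * ∑ i ∈ Finset.range (n + 1), (n.choose i : ℝ) * M i * |K (n - i)| with hC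
  have hC0 : 0 ≤ C := by
    refine mul_nonneg (by positivity) (Finset.sum_nonneg fun i _ => ?_)
    have := hM0 i
    positivity
  have hbound : ∀ ε ∈ Icc (0 : ℝ) 1, SchwartzMap.seminorm ℝ k n (f ε) ≤ ε * C := fun ε hε => by
    refine seminorm_le_bound ℝ k n (f ε) (mul_nonneg hε.1 hC0) fun x => ?_
    have hfe : ⇑(f ε) = fun y => χ y * F (ε • y) := funext (hf ε)
    have hFe : ContDiff ℝ (⊤ : ℕ∞) fun y => F (ε • y) := hF.comp (contDiff_const_smul ε)
    by_cases hx : x ∈ tsupport χ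
    · have hxR := hR hx
      have h1 := norm_iteratedFDeriv_mul_le hχ hFe x (n := n) (by exact_mod_cast le_top)
      rw [hfe]
      have hxR' := mem_closedBall_zero_iff.1 hxR
      have h2 : ‖x‖ ^ k ≤ |R| ^ k := by gcongr; exact hxR'.trans (le_abs_self R)
      have h3 : ∑ i ∈ Finset.range (n + 1), (n.choose i : ℝ) * ‖iteratedFDeriv ℝ i χ x‖ *
          ‖iteratedFDeriv ℝ (n - i) (fun y => F (ε • y)) x‖ ≤
          ε * ∑ i ∈ Finset.range (n + 1), (n.choose i : ℝ) * M i * |K (n - i)| := by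
        rw [Finset.mul_sum]
        refine Finset.sum_le_sum fun i _ => ?_
        have h4 := hK (n - i) ε hε x hxR
        have h5 : ε * K (n - i) ≤ ε * |K (n - i)| :=
          mul_le_mul_of_nonneg_left (le_abs_self _) hε.1
        calc _ ≤ (n.choose i : ℝ) * M i * (ε * |K (n - i)|) := by
              gcongr
              · exact mul_nonneg (by positivity) (hM0 i)
              · exact hM i x
              · exact h4.trans h5
          _ = _ := by ring
      calc _ ≤ |R| ^ k * (ε * ∑ i ∈ Finset.range (n + 1),
            (n.choose i : ℝ) * M i * |K (n - i)|) :=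
            mul_le_mul h2 (h1.trans h3) (norm_nonneg _) (by positivity)
        _ = _ := by rw [hC]; ring
    · have h0 : iteratedFDeriv ℝ n (f ε) x = 0 := by
        by_contra hne
        have h1 : x ∈ tsupport (f ε) := support_iteratedFDeriv_subset n hne
        rw [hfe] at h1
        exact hx (tsupport_mul_subset_left h1)
      rw [h0, norm_zero, mul_zero]
      exact mul_nonneg hε.1 hC0
  have hlim : Tendsto (fun ε : ℝ => ε * C) (𝓝[>] 0) (𝓝 0) := by
    have : Continuous fun ε : ℝ => ε * C := by fun_prop
    simpa using (this.tendsto 0).mono_left nhdsWithin_le_nhds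
  filter_upwards [hlim.eventually (gt_mem_nhds hδ), Ioo_mem_nhdsGT (zero_lt_one (α := ℝ))] with
    ε h1 h2
  rw [sub_zero]
  exact (hbound ε ⟨h2.1.le, h2.2.le⟩).trans_lt h1

lemma tendsto_fnorm_mul_comp_smul {χ F : V → ℝ} (hχ : ContDiff ℝ (⊤ : ℕ∞) χ)
    (hχc : HasCompactSupport χ) (hF : ContDiff ℝ (⊤ : ℕ∞) F) (hF0 : F 0 = 0)
    (f : ℝ → 𝓢(V, ℝ)) (hf : ∀ ε x, f ε x = χ x * F (ε • x)) :
    Tendsto (fun ε => fnorm 2 0 0 (f ε)) (𝓝[>] 0) (𝓝 0) := by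
  obtain ⟨Q, hQ, hQ0, hle⟩ := exists_continuous_fnorm_le (V := V)
  have h := (hQ.tendsto 0).comp (tendsto_seminorm_mul_comp_smul hχ hχc hF hF0 f hf)
  rw [hQ0] at h
  exact squeeze_zero (fun ε => fnorm_nonneg 2 le_rfl 0 _) (fun ε => hle _) h

section FreeMap

variable {d : ℕ}

/-- Unordered pairs of coordinate indices. -/
abbrev Pairs (d : ℕ) := {p : Fin d × Fin d // p.1 ≤ p.2}

lemma card_pairs (d : ℕ) : Fintype.card (Pairs d) = d * (d + 1) / 2 := by
  have h : Fintype.card (Pairs d) = Fintype.card (Sym2 (Fin d)) :=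
    Fintype.card_congr (Sym2.sortEquiv (α := Fin d)).symm
  rw [h, Sym2.card, Fintype.card_fin, Nat.choose_two_right, mul_comm, Nat.add_sub_cancel]

/-- The direction vector attached to a pair of indices. -/
def pairVec (κ : Pairs d) (i : Fin d) : ℝ := if κ.1.1 = i ∨ κ.1.2 = i then 1 else 0

/-- The linear functional attached to a pair of indices. -/
def pairForm (κ : Pairs d) : EuclideanSpace ℝ (Fin d) →L[ℝ] ℝ :=
  ∑ i, pairVec κ i • EuclideanSpace.proj i

lemma pairForm_single (κ : Pairs d) (j : Fin d) :
    pairForm κ (EuclideanSpace.single j 1) = pairVec κ j := by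
  simp [pairForm, _root_.sum_apply]

lemma pairVec_eq_zero_of_forall_sum {z : Pairs d → ℝ}
    (hz : ∀ μ : Pairs d, ∑ κ, pairVec κ μ.1.1 * pairVec κ μ.1.2 * z κ = 0) : z = 0 := by
  have hoff : ∀ μ : Pairs d, μ.1.1 < μ.1.2 → z μ = 0 := fun μ hμ => by
    have h := hz μ
    rw [Finset.sum_eq_single μ] at h
    · simpa [pairVec] using h
    · rintro ⟨⟨a, b⟩, hab⟩ - hne
      obtain ⟨⟨i, j⟩, hij⟩ := μ
      simp only [pairVec, ne_eq, Subtype.mk.injEq, Prod.mk.injEq] at *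
      split_ifs <;> grind
    · simp
  funext μ
  rcases lt_or_eq_of_le μ.2 with hμ | hμ
  · exact hoff μ hμ
  · have h := hz μ
    rw [Finset.sum_eq_single μ] at h
    · simpa [pairVec] using h
    · rintro ⟨⟨a, b⟩, hab⟩ - hne
      rcases lt_or_eq_of_le hab with h' | h'
      · rw [hoff ⟨⟨a, b⟩, hab⟩ h', mul_zero]
      · obtain ⟨⟨i, j⟩, hij⟩ := μ
        simp only [pairVec, ne_eq, Subtype.mk.injEq, Prod.mk.injEq] at *
        split_ifs <;> grind
    · simp

variable (A B : Matrix (Fin d) (Fin d) ℝ)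

/-- Coefficients of the cubic correction. -/
def cubicCoef (κ : Pairs d) (a : Fin d) : ℝ := ∑ j, B j a * pairVec κ j

/-- A free map inducing a metric that is constant up to fourth order. -/
def freeMap : Fin d ⊕ Pairs d → EuclideanSpace ℝ (Fin d) → ℝ
  | .inl a, x => ∑ j, A a j * x j - (1 / 6) * ∑ κ, cubicCoef B κ a * pairForm κ x ^ 3
  | .inr κ, x => (1 / 2) * pairForm κ x ^ 2

/-- The first order partial derivatives of `freeMap`. -/
def freeMapD₁ : Fin d ⊕ Pairs d → Fin d → EuclideanSpace ℝ (Fin d) → ℝ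
  | .inl a, i, x => A a i - (1 / 2) * ∑ κ, cubicCoef B κ a * pairVec κ i * pairForm κ x ^ 2
  | .inr κ, i, x => pairVec κ i * pairForm κ x

/-- The second order partial derivatives of `freeMap`. -/
def freeMapD₂ : Fin d ⊕ Pairs d → Fin d → Fin d → EuclideanSpace ℝ (Fin d) → ℝ
  | .inl a, i, j, x => -∑ κ, cubicCoef B κ a * pairVec κ i * pairVec κ j * pairForm κ x
  | .inr κ, i, j, _ => pairVec κ i * pairVec κ j

/-- The fourth order deviation of the metric induced by `freeMap` from a constant metric. -/
def metricDefect (i j : Fin d) (x : EuclideanSpace ℝ (Fin d)) : ℝ :=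
  (1 / 4) * ∑ a, (∑ κ, cubicCoef B κ a * pairVec κ i * pairForm κ x ^ 2) *
    ∑ κ, cubicCoef B κ a * pairVec κ j * pairForm κ x ^ 2

lemma contDiff_freeMap (c : Fin d ⊕ Pairs d) : ContDiff ℝ (⊤ : ℕ∞) (freeMap A B c) := by
  cases c <;> unfold freeMap <;> fun_prop

lemma contDiff_freeMapD₁ (c : Fin d ⊕ Pairs d) (i : Fin d) :
    ContDiff ℝ (⊤ : ℕ∞) (freeMapD₁ A B c i) := by
  cases c <;> unfold freeMapD₁ <;> fun_prop

lemma contDiff_freeMapD₂ (c : Fin d ⊕ Pairs d) (i j : Fin d) :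
    ContDiff ℝ (⊤ : ℕ∞) (freeMapD₂ B c i j) := by
  cases c <;> unfold freeMapD₂ <;> fun_prop

lemma contDiff_metricDefect (i j : Fin d) : ContDiff ℝ (⊤ : ℕ∞) (metricDefect B i j) := by
  unfold metricDefect; fun_prop

lemma metricDefect_comm (i j : Fin d) (x : EuclideanSpace ℝ (Fin d)) :
    metricDefect B i j x = metricDefect B j i x := by
  simp only [metricDefect]
  congr 1
  exact Finset.sum_congr rfl fun a _ => mul_comm _ _

lemma metricDefect_smul (i j : Fin d) (c : ℝ) (x : EuclideanSpace ℝ (Fin d)) :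
    metricDefect B i j (c • x) = c ^ 4 * metricDefect B i j x := by
  have h : ∀ a i, ∑ κ, cubicCoef B κ a * pairVec κ i * pairForm κ (c • x) ^ 2 =
      c ^ 2 * ∑ κ, cubicCoef B κ a * pairVec κ i * pairForm κ x ^ 2 := fun a i => by
    rw [Finset.mul_sum]
    refine Finset.sum_congr rfl fun κ _ => ?_
    rw [map_smul, smul_eq_mul]; ring
  simp only [metricDefect, h]
  simp only [Finset.mul_sum (s := (Finset.univ : Finset (Fin d)))]
  exact Finset.sum_congr rfl fun a _ => by ring

lemma hasFDerivAt_pairForm_pow (κ : Pairs d) (n : ℕ) (x : EuclideanSpace ℝ (Fin d)) :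
    HasFDerivAt (fun y => pairForm κ y ^ n) ((n * pairForm κ x ^ (n - 1)) • pairForm κ) x := by
  have h : HasFDerivAt (fun y => pairForm κ y) (pairForm κ) x := (pairForm κ).hasFDerivAt
  simpa using h.pow n

lemma fderiv_freeMap (c : Fin d ⊕ Pairs d) (x : EuclideanSpace ℝ (Fin d)) (i : Fin d) :
    fderiv ℝ (freeMap A B c) x (EuclideanSpace.single i 1) = freeMapD₁ A B c i x := by
  cases c with
  | inl a =>
    have h1 : HasFDerivAt (fun y : EuclideanSpace ℝ (Fin d) => ∑ j, A a j * y j)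
        (∑ j, A a j • (EuclideanSpace.proj j : EuclideanSpace ℝ (Fin d) →L[ℝ] ℝ)) x :=
      HasFDerivAt.fun_sum fun j _ =>
        (EuclideanSpace.proj j : EuclideanSpace ℝ (Fin d) →L[ℝ] ℝ).hasFDerivAt.const_mul (A a j)
    have h2 := h1.sub ((HasFDerivAt.fun_sum (u := Finset.univ) fun κ _ =>
      (hasFDerivAt_pairForm_pow κ 3 x).const_mul (cubicCoef B κ a)).const_mul (1 / 6))
    have h3 : HasFDerivAt (freeMap A B (.inl a)) _ x := h2
    rw [h3.fderiv]
    simp only [_root_.sub_apply, _root_.sum_apply, _root_.smul_apply, pairForm_single, smul_eq_mul,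
      freeMapD₁, Finset.mul_sum]
    congr 1
    · simp
    · refine Finset.sum_congr rfl fun κ _ => ?_
      norm_num; ring
  | inr κ =>
    have h2 : HasFDerivAt (freeMap A B (.inr κ)) _ x :=
      (hasFDerivAt_pairForm_pow κ 2 x).const_mul (1 / 2)
    rw [h2.fderiv]
    simp only [_root_.smul_apply, pairForm_single, smul_eq_mul, freeMapD₁]
    norm_num; ring

lemma fderiv_freeMapD₁ (c : Fin d ⊕ Pairs d) (i j : Fin d) (x : EuclideanSpace ℝ (Fin d)) :
    fderiv ℝ (freeMapD₁ A B c i) x (EuclideanSpace.single j 1) = freeMapD₂ B c i j x := by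
  cases c with
  | inl a =>
    have h3 : HasFDerivAt (freeMapD₁ A B (.inl a) i) _ x :=
      ((HasFDerivAt.fun_sum (u := Finset.univ) fun κ _ =>
      (hasFDerivAt_pairForm_pow κ 2 x).const_mul
        (cubicCoef B κ a * pairVec κ i)).const_mul (1 / 2)).const_sub (A a i)
    rw [h3.fderiv]
    simp only [_root_.neg_apply, _root_.sum_apply, _root_.smul_apply, pairForm_single, smul_eq_mul,
      freeMapD₂, Finset.mul_sum]
    congr 1
    refine Finset.sum_congr rfl fun κ _ => ?_
    norm_num; ring
  | inr κ =>
    have h2 : HasFDerivAt (freeMapD₁ A B (.inr κ) i) _ x :=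
      (pairForm κ).hasFDerivAt.const_mul (pairVec κ i)
    rw [h2.fderiv]
    simp [pairForm_single, freeMapD₂]

lemma freeMapD₂_comm (c : Fin d ⊕ Pairs d) (i j : Fin d) (x : EuclideanSpace ℝ (Fin d)) :
    freeMapD₂ B c i j x = freeMapD₂ B c j i x := by
  cases c with
  | inl a =>
    simp only [freeMapD₂]
    congr 1
    refine Finset.sum_congr rfl fun κ _ => ?_
    ring
  | inr κ => exact mul_comm _ _

lemma sum_mul_cubicCoef (hBA : B * A = 1) (κ : Pairs d) (i : Fin d) :
    ∑ a, A a i * cubicCoef B κ a = pairVec κ i := by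
  simp only [cubicCoef, Finset.mul_sum]
  rw [Finset.sum_comm]
  have : ∀ j, ∑ a, A a i * (B j a * pairVec κ j) = (B * A) j i * pairVec κ j := fun j => by
    rw [Matrix.mul_apply, Finset.sum_mul]
    exact Finset.sum_congr rfl fun a _ => by ring
  simp [this, hBA, Matrix.one_apply]

lemma sum_freeMapD₁_mul (hBA : B * A = 1) (i j : Fin d) (x : EuclideanSpace ℝ (Fin d)) :
    ∑ c, freeMapD₁ A B c i x * freeMapD₁ A B c j x = (Aᵀ * A) i j + metricDefect B i j x := by
  set P : Fin d → Fin d → ℝ := fun a i =>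
    ∑ κ, cubicCoef B κ a * pairVec κ i * pairForm κ x ^ 2 with hP
  have hAP : ∀ i j, ∑ a, A a i * P a j = ∑ κ, pairVec κ i * pairVec κ j * pairForm κ x ^ 2 :=
      fun i j => by
    simp only [hP, Finset.mul_sum]
    rw [Finset.sum_comm]
    refine Finset.sum_congr rfl fun κ _ => ?_
    rw [← sum_mul_cubicCoef A B hBA κ i, Finset.sum_mul, Finset.sum_mul]
    exact Finset.sum_congr rfl fun a _ => by ring
  rw [Fintype.sum_sum_type]
  have h1 : ∑ a, freeMapD₁ A B (.inl a) i x * freeMapD₁ A B (.inl a) j x =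
      ∑ a, A a i * A a j - (1 / 2) * ∑ a, A a i * P a j - (1 / 2) * ∑ a, A a j * P a i
        + (1 / 4) * ∑ a, P a i * P a j := by
    simp only [Finset.mul_sum, ← Finset.sum_sub_distrib, ← Finset.sum_add_distrib]
    refine Finset.sum_congr rfl fun a _ => ?_
    simp only [freeMapD₁, hP]
    ring
  have h2 : ∑ κ, freeMapD₁ A B (.inr κ) i x * freeMapD₁ A B (.inr κ) j x =
      ∑ κ, pairVec κ i * pairVec κ j * pairForm κ x ^ 2 :=
    Finset.sum_congr rfl fun κ _ => by simp only [freeMapD₁]; ring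
  have h3 : ∑ κ, pairVec κ j * pairVec κ i * pairForm κ x ^ 2 =
      ∑ κ, pairVec κ i * pairVec κ j * pairForm κ x ^ 2 :=
    Finset.sum_congr rfl fun κ _ => by ring
  rw [h1, h2, hAP, hAP, h3, Matrix.mul_apply]
  simp only [Matrix.transpose_apply, metricDefect, hP]
  ring

end FreeMap

section Cutoff

lemma exists_schwartz_eqOn_ball {W : Set V} (hW : IsOpen W) {x₀ : V} (hx₀ : x₀ ∈ W) :
    ∃ r > 0, Metric.ball x₀ r ⊆ W ∧ ∀ f : V → ℝ, ContDiffOn ℝ (⊤ : ℕ∞) f W →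
      ∃ φ : 𝓢(V, ℝ), ∀ x ∈ Metric.ball x₀ r, φ x = f x := by
  obtain ⟨R, hR, hRW⟩ := Metric.isOpen_iff.1 hW x₀ hx₀
  let χ : ContDiffBump x₀ := ⟨R / 4, R / 2, by positivity, by linarith⟩
  refine ⟨R / 4, by positivity, (Metric.ball_subset_ball (by linarith)).trans hRW, fun f hf => ?_⟩
  have hsm : ContDiff ℝ (⊤ : ℕ∞) fun x => χ x * f x := by
    rw [contDiff_iff_contDiffAt]
    intro x
    by_cases hx : x ∈ tsupport χ
    · have hxW : x ∈ W := by
        rw [χ.tsupport_eq] at hx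
        exact hRW (Metric.closedBall_subset_ball (by simp only [χ]; linarith) hx)
      exact χ.contDiff.contDiffAt.mul (hf.contDiffAt (hW.mem_nhds hxW))
    · have h0 : (fun x => χ x * f x) =ᶠ[𝓝 x] fun _ => 0 := by
        filter_upwards [notMem_tsupport_iff_eventuallyEq.1 hx] with y hy
        simp [hy]
      exact contDiffAt_const.congr_of_eventuallyEq h0
  refine ⟨(χ.hasCompactSupport.mul_right (f' := f)).toSchwartzMap hsm, fun x hx => ?_⟩
  change χ x * f x = f x
  rw [χ.one_of_mem_closedBall (Metric.ball_subset_closedBall hx), one_mul]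

end Cutoff

section RightInverse

lemma contDiff_det {n : Type*} [Fintype n] [DecidableEq n] {M : V → Matrix n n ℝ}
    (hM : ∀ i j, ContDiff ℝ (⊤ : ℕ∞) fun x => M x i j) :
    ContDiff ℝ (⊤ : ℕ∞) fun x => (M x).det := by
  simp only [Matrix.det_apply]
  fun_prop

lemma contDiffOn_inv_apply {n : Type*} [Fintype n] [DecidableEq n] {M : V → Matrix n n ℝ}
    (hM : ∀ i j, ContDiff ℝ (⊤ : ℕ∞) fun x => M x i j) (i j : n) :
    ContDiffOn ℝ (⊤ : ℕ∞) (fun x => (M x)⁻¹ i j) {x | (M x).det ≠ 0} := by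
  have hadj : ContDiff ℝ (⊤ : ℕ∞) fun x => (M x).adjugate i j := by
    simp only [Matrix.adjugate_apply]
    refine contDiff_det fun k l => ?_
    by_cases hk : k = j
    · subst hk; simpa using contDiff_const
    · simpa [Matrix.updateRow_ne hk] using hM k l
  simp only [Matrix.inv_def, Matrix.smul_apply, Ring.inverse_eq_inv', smul_eq_mul]
  exact ((contDiff_det hM).contDiffOn.inv fun x hx => hx).mul hadj.contDiffOn

variable {d : ℕ} (A B : Matrix (Fin d) (Fin d) ℝ)

/-- The matrix of all first and second order partial derivatives of `freeMap`. -/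
def osculatingMatrix (x : EuclideanSpace ℝ (Fin d)) :
    Matrix (Fin d ⊕ Pairs d) (Fin d ⊕ Pairs d) ℝ :=
  Matrix.of fun r c => Sum.elim (fun j => freeMapD₁ A B c j x)
    (fun μ => freeMapD₂ B c μ.1.1 μ.1.2 x) r

lemma det_osculatingMatrix_zero_ne_zero (hBA : B * A = 1) : (osculatingMatrix A B 0).det ≠ 0 := by
  rw [Ne, ← Matrix.exists_mulVec_eq_zero_iff]
  rintro ⟨y, hy0, hy⟩
  refine hy0 ?_
  have hl : (fun a => y (.inl a)) = 0 := by
    have h : Aᵀ *ᵥ (fun a => y (.inl a)) = 0 := by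
      funext j
      have := congrFun hy (.inl j)
      simpa [Matrix.mulVec, dotProduct, osculatingMatrix, freeMapD₁] using this
    have h' := congrArg (Bᵀ *ᵥ ·) h
    have hBA' : Bᵀ * Aᵀ = 1 := by
      rw [← Matrix.transpose_mul, mul_eq_one_comm.1 hBA, Matrix.transpose_one]
    simpa [Matrix.mulVec_mulVec, hBA'] using h'
  have hr : (fun κ => y (.inr κ)) = 0 := by
    refine pairVec_eq_zero_of_forall_sum fun μ => ?_
    have := congrFun hy (.inr μ)
    simpa [Matrix.mulVec, dotProduct, osculatingMatrix, freeMapD₂] using this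
  funext c
  cases c with
  | inl a => exact congrFun hl a
  | inr κ => exact congrFun hr κ

lemma exists_schwartz_right_inverse (hBA : B * A = 1) :
    ∃ r > 0, ∃ (E₁ : Fin d ⊕ Pairs d → Fin d → 𝓢(EuclideanSpace ℝ (Fin d), ℝ))
      (E₂ : Fin d ⊕ Pairs d → Fin d → Fin d → 𝓢(EuclideanSpace ℝ (Fin d), ℝ)),
      ∀ x ∈ Metric.ball 0 r, ∀ (q : Fin d → ℝ) (s : Fin d → Fin d → ℝ),
        (∀ i j, s i j = s j i) →
        (∀ j, ∑ a, freeMapD₁ A B a j x *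
          (∑ k, E₁ a k x * q k + ∑ k, ∑ l, E₂ a k l x * s k l) = q j) ∧
        (∀ i j, ∑ a, freeMapD₂ B a i j x *
          (∑ k, E₁ a k x * q k + ∑ k, ∑ l, E₂ a k l x * s k l) = s i j) := by
  have hM : ∀ i j, ContDiff ℝ (⊤ : ℕ∞) fun x => osculatingMatrix A B x i j := by
    rintro (i | i) j
    · exact contDiff_freeMapD₁ A B j i
    · exact contDiff_freeMapD₂ B j i.1.1 i.1.2
  have hW : IsOpen {x | (osculatingMatrix A B x).det ≠ 0} :=
    isOpen_ne_fun (contDiff_det hM).continuous continuous_const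
  obtain ⟨r, hr, hrW, hf⟩ :=
    exists_schwartz_eqOn_ball hW (x₀ := 0) (det_osculatingMatrix_zero_ne_zero A B hBA)
  choose φ hφ using fun i j => hf _ (contDiffOn_inv_apply hM i j)
  refine ⟨r, hr, fun a k => φ a (.inl k),
    fun a k l => if h : k ≤ l then φ a (.inr ⟨(k, l), h⟩) else 0, fun x hx q s hs => ?_⟩
  let w : Fin d ⊕ Pairs d → ℝ := Sum.elim q fun μ => s μ.1.1 μ.1.2
  have hw : ∀ a, ∑ k, φ a (.inl k) x * q k + ∑ k, ∑ l,
      (if h : k ≤ l then φ a (.inr ⟨(k, l), h⟩) else 0 : 𝓢(EuclideanSpace ℝ (Fin d), ℝ)) x * s k l =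
      ((osculatingMatrix A B x)⁻¹ *ᵥ w) a := fun a => by
    rw [Matrix.mulVec, dotProduct, Fintype.sum_sum_type]
    simp only [← hφ _ _ x hx]
    congr 1
    rw [← Fintype.sum_prod_type', ← Fintype.sum_subtype_add_sum_subtype
      (fun p : Fin d × Fin d => p.1 ≤ p.2)]
    rw [Finset.sum_eq_zero (s := (Finset.univ : Finset {p : Fin d × Fin d // ¬ p.1 ≤ p.2})), add_zero]
    · refine Finset.sum_congr rfl fun μ _ => ?_
      rw [dif_pos μ.2]; rfl
    · rintro ⟨p, hp⟩ -
      rw [dif_neg hp]; simp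
  have hinv : osculatingMatrix A B x *ᵥ ((osculatingMatrix A B x)⁻¹ *ᵥ w) = w := by
    rw [Matrix.mulVec_mulVec, Matrix.mul_nonsing_inv _ (isUnit_iff_ne_zero.2 (hrW hx)),
      Matrix.one_mulVec]
  simp only [hw]
  refine ⟨fun j => congrFun hinv (.inl j), fun i j => ?_⟩
  rcases le_total i j with hij | hij
  · exact congrFun hinv (.inr ⟨(i, j), hij⟩)
  · simp only [freeMapD₂_comm B _ i j, hs i j]
    exact congrFun hinv (.inr ⟨(j, i), hij⟩)

end RightInverse

section Rescaling

variable {d : ℕ}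

lemma exists_map_of_metric {A B : Matrix (Fin d) (Fin d) ℝ} (hBA : B * A = 1)
    {H : Fin d → Fin d → EuclideanSpace ℝ (Fin d) → ℝ}
    (hH : ∀ i j, ContDiff ℝ (⊤ : ℕ∞) (H i j)) (hH0 : ∀ i j, H i j 0 = 0)
    (hHs : ∀ i j x, H i j x = H j i x) :
    ∃ ε > (0 : ℝ), ∃ R > (0 : ℝ), ∃ w : Fin d ⊕ Pairs d → EuclideanSpace ℝ (Fin d) → ℝ,
      (∀ c, ContDiff ℝ (⊤ : ℕ∞) (w c)) ∧ ∀ x ∈ Metric.ball 0 R, ∀ i j,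
        ∑ c, fderiv ℝ (w c) x (EuclideanSpace.single i 1) *
          fderiv ℝ (w c) x (EuclideanSpace.single j 1) = (Aᵀ * A) i j + H i j (ε • x) := by
  obtain ⟨r, hr, E₁, E₂, hE⟩ := exists_schwartz_right_inverse A B hBA
  obtain ⟨δ, hδ, hsol⟩ := exists_perturbation (EuclideanSpace.basisFun (Fin d) ℝ)
    (D₁ := freeMapD₁ A B) (D₂ := freeMapD₂ B) E₁ E₂ Metric.isOpen_ball
    (fun a i x => ((contDiff_freeMapD₁ A B a i).differentiable (by simp)).differentiableAt)
    (fun a i j x => by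
      rw [EuclideanSpace.basisFun_apply]; exact fderiv_freeMapD₁ A B a i j x) hE
  let χ : ContDiffBump (0 : EuclideanSpace ℝ (Fin d)) := ⟨r, 2 * r, hr, by linarith⟩
  have hχ : ∀ x ∈ Metric.ball (0 : EuclideanSpace ℝ (Fin d)) r, χ x = 1 := fun x hx =>
    χ.one_of_mem_closedBall (Metric.ball_subset_closedBall hx)
  have hχmul : ∀ {f : EuclideanSpace ℝ (Fin d) → ℝ}, ContDiff ℝ (⊤ : ℕ∞) f →
      ContDiff ℝ (⊤ : ℕ∞) (fun x => χ x * f x) ∧ HasCompactSupport fun x => χ x * f x :=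
    fun hf => ⟨χ.contDiff.mul hf, χ.hasCompactSupport.mul_right⟩
  let m : Fin d → Fin d → 𝓢(EuclideanSpace ℝ (Fin d), ℝ) := fun i j =>
    (hχmul (contDiff_metricDefect B i j)).2.toSchwartzMap (hχmul (contDiff_metricDefect B i j)).1
  have hm : ∀ i j x, m i j x = χ x * metricDefect B i j x := fun i j x => rfl
  obtain ⟨ρ, hρm, hρ0, hρ1⟩ : ∃ ρ : ℝ, (∀ i j, ρ ^ 2 * fnorm 2 0 0 (m i j) ≤ δ / 2) ∧
      0 < ρ ∧ ρ ≤ 1 := by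
    have h1 : ∀ᶠ ρ : ℝ in 𝓝[>] 0, ∀ i j, ρ ^ 2 * fnorm 2 0 0 (m i j) ≤ δ / 2 := by
      refine eventually_all.2 fun i => eventually_all.2 fun j => ?_
      have ht : Tendsto (fun ρ : ℝ => ρ ^ 2 * fnorm 2 0 0 (m i j)) (𝓝[>] 0) (𝓝 0) := by
        have : Continuous fun ρ : ℝ => ρ ^ 2 * fnorm 2 0 0 (m i j) := by fun_prop
        simpa using (this.tendsto 0).mono_left nhdsWithin_le_nhds
      exact (ht.eventually (gt_mem_nhds (half_pos hδ))).mono fun _ h => h.le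
    obtain ⟨ρ, h, h'⟩ := (h1.and (Ioc_mem_nhdsGT one_pos)).exists
    exact ⟨ρ, h, h'.1, h'.2⟩
  have hdil : ContDiff ℝ (⊤ : ℕ∞) fun x : EuclideanSpace ℝ (Fin d) => ρ⁻¹ • x := by fun_prop
  let m' : Fin d → Fin d → 𝓢(EuclideanSpace ℝ (Fin d), ℝ) := fun i j =>
    ((hχmul (contDiff_metricDefect B i j)).2.comp_smul (inv_ne_zero hρ0.ne')).toSchwartzMap
      ((hχmul (contDiff_metricDefect B i j)).1.comp hdil)
  have hm' : ∀ i j x, m' i j x = m i j (ρ⁻¹ • x) := fun i j x => rfl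
  have hHε : ∀ i j (ε : ℝ), ContDiff ℝ (⊤ : ℕ∞) fun x => H i j (ε • x) := fun i j ε =>
    (hH i j).comp (contDiff_const_smul ε)
  let f : Fin d → Fin d → ℝ → 𝓢(EuclideanSpace ℝ (Fin d), ℝ) := fun i j ε =>
    (hχmul (hHε i j ε)).2.toSchwartzMap (hχmul (hHε i j ε)).1
  have hf : ∀ i j ε x, f i j ε x = χ x * H i j (ε • x) := fun i j ε x => rfl
  obtain ⟨ε, hεf, hε⟩ : ∃ ε : ℝ, (∀ i j, fnorm 2 0 0 (f i j ε) ≤ δ / 2) ∧ 0 < ε := by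
    have h1 : ∀ᶠ ε : ℝ in 𝓝[>] 0, ∀ i j, fnorm 2 0 0 (f i j ε) ≤ δ / 2 := by
      refine eventually_all.2 fun i => eventually_all.2 fun j => ?_
      have ht := tendsto_fnorm_mul_comp_smul χ.contDiff χ.hasCompactSupport (hH i j) (hH0 i j)
        (f i j) (hf i j)
      exact (ht.eventually (gt_mem_nhds (half_pos hδ))).mono fun _ h => h.le
    exact (h1.and self_mem_nhdsWithin).exists
  obtain ⟨v, hv, hvsol⟩ := hsol (fun i j => f i j ε - ρ ^ 4 • m' i j)
    (fun i j => by
      ext x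
      simp only [_root_.sub_apply, _root_.smul_apply, hf, hm', hm, hHs i j,
        metricDefect_comm B i j])
    (fun i j => by
      calc _ ≤ fnorm 2 0 0 (f i j ε) + fnorm 2 0 0 (ρ ^ 4 • m' i j) :=
            fnorm_sub_le 2 le_rfl 0 _ _
        _ ≤ δ / 2 + ρ ^ 4 * ((ρ ^ 2)⁻¹ * fnorm 2 0 0 (m i j)) := by
            rw [fnorm_smul, abs_of_pos (by positivity)]
            exact add_le_add (hεf i j) (mul_le_mul_of_nonneg_left
              (fnorm_dilation_le hρ0 hρ1 _ _ (hm' i j)) (by positivity))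
        _ = δ / 2 + ρ ^ 2 * fnorm 2 0 0 (m i j) := by field_simp
        _ ≤ δ := by linarith [hρm i j])
  refine ⟨ε, hε, ρ * r, by positivity, fun c x => freeMap A B c x + v c x,
    fun c => (contDiff_freeMap A B c).add (hv c), fun x hx i j => ?_⟩
  have hxr : x ∈ Metric.ball (0 : EuclideanSpace ℝ (Fin d)) r :=
    Metric.ball_subset_ball (by nlinarith) hx
  have hxρ : ρ⁻¹ • x ∈ Metric.ball (0 : EuclideanSpace ℝ (Fin d)) r := by
    rw [mem_ball_zero_iff] at hx ⊢
    rw [norm_smul, norm_inv, Real.norm_of_nonneg hρ0.le]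
    rwa [inv_mul_lt_iff₀ hρ0]
  have hder : ∀ c i, fderiv ℝ (fun x => freeMap A B c x + v c x) x (EuclideanSpace.single i 1) =
      freeMapD₁ A B c i x + fderiv ℝ (v c) x (EuclideanSpace.basisFun (Fin d) ℝ i) := fun c i => by
    rw [fderiv_fun_add ((contDiff_freeMap A B c).differentiable (by simp)).differentiableAt
      ((hv c).differentiable (by simp)).differentiableAt, _root_.add_apply, fderiv_freeMap,
      EuclideanSpace.basisFun_apply]
  simp only [hder]
  rw [hvsol x hxr i j, sum_freeMapD₁_mul A B hBA]
  simp only [_root_.sub_apply, _root_.smul_apply, hf, hm', hm, hχ x hxr, hχ _ hxρ,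
    metricDefect_smul, smul_eq_mul]
  field_simp
  ring

end Rescaling

section Injectivity

lemma exists_isOpen_injOn {E F : Type*} [NormedAddCommGroup E] [NormedSpace ℝ E]
    [FiniteDimensional ℝ E] [NormedAddCommGroup F] [NormedSpace ℝ F] [FiniteDimensional ℝ F]
    {u : E → F} {u' : E →L[ℝ] F} {p : E} (hu : HasStrictFDerivAt u u' p)
    (hinj : Function.Injective u') : ∃ U : Set E, IsOpen U ∧ p ∈ U ∧ InjOn u U := by
  have := FiniteDimensional.complete ℝ E
  obtain ⟨L, hL⟩ := (u' : E →ₗ[ℝ] F).exists_leftInverse_of_injective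
    (LinearMap.ker_eq_bot.2 hinj)
  have hcomp : HasStrictFDerivAt (fun x => L.toContinuousLinearMap (u x))
      ((ContinuousLinearEquiv.refl ℝ E : E ≃L[ℝ] E) : E →L[ℝ] E) p := by
    convert L.toContinuousLinearMap.hasStrictFDerivAt.comp p hu using 1
    ext x
    exact (LinearMap.congr_fun hL x).symm
  refine ⟨(hcomp.toOpenPartialHomeomorph _).source, (hcomp.toOpenPartialHomeomorph _).open_source,
    hcomp.mem_toOpenPartialHomeomorph_source, fun x hx y hy hxy => ?_⟩
  exact (hcomp.toOpenPartialHomeomorph _).injOn hx hy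
    (congrArg L.toContinuousLinearMap hxy)

end Injectivity

section Factorization

open scoped MatrixOrder in
lemma exists_transpose_mul_self_eq {d : ℕ} {G : Matrix (Fin d) (Fin d) ℝ} (hG : G.PosDef) :
    ∃ A B : Matrix (Fin d) (Fin d) ℝ, Aᵀ * A = G ∧ B * A = 1 := by
  obtain ⟨A, hA⟩ := (CStarAlgebra.nonneg_iff_eq_star_mul_self (a := G)).1 hG.posSemidef.nonneg
  have hAG : Aᵀ * A = G := by
    rw [hA, Matrix.star_eq_conjTranspose, Matrix.conjTranspose_eq_transpose_of_trivial]
  refine ⟨A, A⁻¹, hAG, Matrix.nonsing_inv_mul A (isUnit_iff_ne_zero.2 fun h0 => hG.det_pos.ne' ?_)⟩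
  rw [← hAG, Matrix.det_mul, h0, mul_zero]

end Factorization

end LocalIsometry

open SchwartzMap LocalIsometry

/-- **Gromov–Rokhlin; Greene (1970).** Every smooth Riemannian metric on an open subset
of `ℝᵈ` admits, near any point, a smooth local isometric embedding into `ℝ^{s_d + d}`,
where `s_d = d(d+1)/2` is the Janet dimension. -/
theorem gromov_rokhlin_greene (d : ℕ) (hd : 1 ≤ d)
    (Ω : Set (EuclideanSpace ℝ (Fin d))) (hΩ : IsOpen Ω)
    (p : EuclideanSpace ℝ (Fin d)) (hp : p ∈ Ω)
    (g : EuclideanSpace ℝ (Fin d) → Matrix (Fin d) (Fin d) ℝ)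
    (hg_smooth : ContDiffOn ℝ (⊤ : ℕ∞) g Ω)
    (hg_met : ∀ x ∈ Ω, (g x).IsSymm ∧ (g x).PosDef) :
    ∃ U : Set (EuclideanSpace ℝ (Fin d)), IsOpen U ∧ p ∈ U ∧ U ⊆ Ω ∧
      ∃ u : EuclideanSpace ℝ (Fin d) → EuclideanSpace ℝ (Fin (d * (d + 1) / 2 + d)),
        ContDiffOn ℝ (⊤ : ℕ∞) u U ∧ Set.InjOn u U ∧
        ∀ x ∈ U, (Jac u x)ᵀ * Jac u x = g x := by
  classical
  obtain ⟨A, B, hAg, hBA⟩ := exists_transpose_mul_self_eq (hg_met p hp).2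
  obtain ⟨r, hr, hrΩ, hcut⟩ := exists_schwartz_eqOn_ball hΩ hp
  have hpr : p ∈ Metric.ball p r := Metric.mem_ball_self hr
  have hgij : ∀ i j, ContDiffOn ℝ (⊤ : ℕ∞) (fun x => g x i j) Ω := fun i j =>
    contDiffOn_pi.1 (contDiffOn_pi.1 hg_smooth i) j
  choose φ hφ using fun i j => hcut _ (hgij i j)
  have hG : ∀ i j, ∀ x ∈ Metric.ball p r, (φ i j x + φ j i x) / 2 = g x i j := fun i j x hx => by
    rw [hφ i j x hx, hφ j i x hx, (hg_met x (hrΩ hx)).1.apply i j]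
    ring
  obtain ⟨ε, hε, R, hR, w, hw, hwsol⟩ := exists_map_of_metric hBA
    (H := fun i j y => (φ i j (p + y) + φ j i (p + y)) / 2 - g p i j)
    (fun i j => by
      have h1 := (φ i j).smooth (⊤ : ℕ∞)
      have h2 := (φ j i).smooth (⊤ : ℕ∞)
      fun_prop)
    (fun i j => by rw [add_zero, hG i j p hpr, sub_self])
    (fun i j y => by rw [add_comm (φ i j _), (hg_met p hp).1.apply i j])
  let e : Fin (d * (d + 1) / 2 + d) ≃ Fin d ⊕ Pairs d := Fintype.equivOfCardEq (by
    rw [Fintype.card_sum, card_pairs, Fintype.card_fin, Fintype.card_fin, add_comm])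
  let u : EuclideanSpace ℝ (Fin d) → EuclideanSpace ℝ (Fin (d * (d + 1) / 2 + d)) := fun x =>
    WithLp.toLp 2 fun k => ε * w (e k) (ε⁻¹ • (x - p))
  have huk : ∀ k, ContDiff ℝ (⊤ : ℕ∞) fun x => u x k := fun k => by
    have := hw (e k)
    change ContDiff ℝ (⊤ : ℕ∞) fun x => ε * w (e k) (ε⁻¹ • (x - p))
    fun_prop
  have hu : ContDiff ℝ (⊤ : ℕ∞) u := contDiff_euclidean.2 huk
  have hJ : ∀ x k j, Jac u x k j =
      fderiv ℝ (w (e k)) (ε⁻¹ • (x - p)) (EuclideanSpace.single j 1) := fun x k j => by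
    have h1 : HasFDerivAt (fun y => ε * w (e k) (ε⁻¹ • (y - p))) _ x :=
      ((((hw (e k)).differentiable (by simp)).differentiableAt.hasFDerivAt).comp x
        (((hasFDerivAt_id x).sub_const p).const_smul ε⁻¹)).const_mul ε
    have h2 : HasFDerivAt (fun y => u y k) _ x :=
      (EuclideanSpace.proj k : EuclideanSpace ℝ _ →L[ℝ] ℝ).hasFDerivAt.comp x
        (hu.differentiable (by simp)).differentiableAt.hasFDerivAt
    have h3 := congrArg (· (EuclideanSpace.single j 1)) (h2.unique h1)
    refine h3.trans ?_
    simp [hε.ne']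
  have hmetric : ∀ x ∈ Metric.ball p (min r (ε * R)), (Jac u x)ᵀ * Jac u x = g x := fun x hx => by
    ext i j
    have hxR : ε⁻¹ • (x - p) ∈ Metric.ball (0 : EuclideanSpace ℝ (Fin d)) R := by
      rw [mem_ball_zero_iff, norm_smul, norm_inv, Real.norm_of_nonneg hε.le, inv_mul_lt_iff₀ hε,
        ← dist_eq_norm]
      exact (Metric.mem_ball.1 hx).trans_le (min_le_right _ _)
    have hxr : x ∈ Metric.ball p r := Metric.ball_subset_ball (min_le_left _ _) hx
    simp only [Matrix.mul_apply, Matrix.transpose_apply, hJ]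
    rw [e.sum_comp fun c => fderiv ℝ (w c) (ε⁻¹ • (x - p)) (EuclideanSpace.single i 1) *
      fderiv ℝ (w c) (ε⁻¹ • (x - p)) (EuclideanSpace.single j 1), hwsol _ hxR, hAg,
      smul_inv_smul₀ hε.ne', add_sub_cancel p x, add_sub_cancel, hG i j x hxr]
  have hpball : p ∈ Metric.ball p (min r (ε * R)) := Metric.mem_ball_self (by positivity)
  have hinj : Function.Injective (fderiv ℝ u p) := by
    rw [injective_iff_map_eq_zero]
    intro v hv
    have hJv : Jac u p *ᵥ v.ofLp = 0 := by
      funext k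
      have h1 : fderiv ℝ u p v k = ∑ j, Jac u p k j * v j := by
        conv_lhs => rw [← (EuclideanSpace.basisFun (Fin d) ℝ).sum_repr v]
        simp [Jac, mul_comm]
      rw [hv] at h1
      exact h1.symm
    have hgv : g p *ᵥ v.ofLp = 0 := by
      rw [← hmetric p hpball, ← Matrix.mulVec_mulVec, hJv, Matrix.mulVec_zero]
    have := Matrix.eq_zero_of_mulVec_eq_zero (hg_met p hp).2.det_pos.ne' hgv
    ext j
    exact congrFun this j
  obtain ⟨U, hU, hpU, hUinj⟩ := exists_isOpen_injOn
    (hu.contDiffAt.hasStrictFDerivAt (by simp)) hinj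
  exact ⟨U ∩ Metric.ball p (min r (ε * R)), hU.inter Metric.isOpen_ball, ⟨hpU, hpball⟩,
    fun x hx => hrΩ (Metric.ball_subset_ball (min_le_left _ _) hx.2), u, hu.contDiffOn,
    hUinj.mono Set.inter_subset_left, fun x hx => hmetric x hx.2⟩
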